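/- arXiv:1106.3112 — 5 statements merged into one kernel-verified Lean document; each statement's English description precedes it below -/
import Mathlib

section
/- Let R be a commutative Noetherian ring and let A = R[X₁, X₂, X₃, …] be the polynomial ring over R in countably infinitely many variables. Then a prime ideal 𝔭 of A has finite height if and only if 𝔭 is finitely generated as an ideal. -/
namespace MvPolynomial

variable {σ R : Type*} [CommRing R]

/-- The inclusion of the polynomial subring in the variables from `s`. -/
noncomputable abbrev inclusionOf (R : Type*) [CommRing R] (s : Finset σ) :
    MvPolynomial s R →+* MvPolynomial σ R :=
  (rename ((↑) : s → σ) : MvPolynomial s R →ₐ[R] MvPolynomial σ R).toRingHom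

theorem exists_inclusionOf_eq {s : Finset σ} {f : MvPolynomial σ R} (hf : f.vars ⊆ s) :
    ∃ g, inclusionOf R s g = f :=
  exists_rename_eq_of_vars_subset_range f _ Subtype.val_injective (by simpa using hf)

theorem isPrime_map_C {P : Ideal R} (hP : P.IsPrime) :
    (P.map (C : R →+* MvPolynomial σ R)).IsPrime := by
  rw [← Ideal.Quotient.isDomain_iff_prime]
  exact (quotientEquivQuotientMvPolynomial (σ := σ) P).symm.toMulEquiv.isDomain _

theorem isPrime_map_inclusionOf (s : Finset σ) {P : Ideal (MvPolynomial s R)} (hP : P.IsPrime) :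
    (P.map (inclusionOf R s)).IsPrime := by
  classical
  let e : MvPolynomial {x // x ∉ s} (MvPolynomial s R) ≃+* MvPolynomial σ R :=
    ((sumAlgEquiv R {x // x ∉ s} s).symm.trans
      (renameEquiv R ((Equiv.sumComm _ _).trans (Equiv.sumCompl (· ∈ s))))).toRingEquiv
  have he : e.toRingHom.comp C = inclusionOf R s := by
    ext i
    · simp [e]
    · simp [e]
  have := isPrime_map_C (σ := {x // x ∉ s}) hP
  rw [← he, ← Ideal.map_map]
  exact Ideal.map_isPrime_of_equiv e

/-- The extension to `R[σ]` of the contraction of `𝔭` to the polynomials in the variables `s`. -/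
noncomputable def extendedContraction (𝔭 : PrimeSpectrum (MvPolynomial σ R)) (s : Finset σ) :
    PrimeSpectrum (MvPolynomial σ R) :=
  ⟨(𝔭.asIdeal.comap (inclusionOf R s)).map (inclusionOf R s),
    isPrime_map_inclusionOf s inferInstance⟩

theorem extendedContraction_le (𝔭 : PrimeSpectrum (MvPolynomial σ R)) (s : Finset σ) :
    extendedContraction 𝔭 s ≤ 𝔭 :=
  Ideal.map_comap_le

theorem mem_extendedContraction {𝔭 : PrimeSpectrum (MvPolynomial σ R)} {s : Finset σ}
    {f : MvPolynomial σ R} (hf : f ∈ 𝔭.asIdeal) (hs : f.vars ⊆ s) :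
    f ∈ (extendedContraction 𝔭 s).asIdeal := by
  obtain ⟨g, rfl⟩ := exists_inclusionOf_eq hs
  exact Ideal.mem_map_of_mem _ hf

theorem extendedContraction_mono (𝔭 : PrimeSpectrum (MvPolynomial σ R)) :
    Monotone (extendedContraction 𝔭) := by
  classical
  intro s t hst
  refine Ideal.map_le_iff_le_comap.2 fun f hf ↦ mem_extendedContraction hf ?_
  refine (vars_rename _ f).trans fun i hi ↦ ?_
  obtain ⟨j, -, rfl⟩ := Finset.mem_image.1 hi
  exact hst j.2

theorem fg_of_height_ne_top [IsNoetherianRing R] {𝔭 : PrimeSpectrum (MvPolynomial σ R)}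
    (h : Order.height 𝔭 ≠ ⊤) : 𝔭.asIdeal.FG := by
  classical
  by_contra hfg
  have step (s : Finset σ) : ∃ t, extendedContraction 𝔭 s < extendedContraction 𝔭 t := by
    have hne : ¬ 𝔭.asIdeal ≤ (extendedContraction 𝔭 s).asIdeal := fun hle ↦ hfg <| by
      rw [le_antisymm hle (extendedContraction_le 𝔭 s)]
      exact ((isNoetherianRing_iff_ideal_fg _).1 inferInstance
        (𝔭.asIdeal.comap (inclusionOf R s))).map _
    obtain ⟨f, hf, hfs⟩ := SetLike.not_le_iff_exists.1 hne
    refine ⟨s ∪ f.vars, (extendedContraction_mono 𝔭 Finset.subset_union_left).lt_of_not_ge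
      fun hle ↦ hfs (hle (mem_extendedContraction hf Finset.subset_union_right))⟩
  have key (n : ℕ) : ∃ s, (n : ℕ∞) ≤ Order.height (extendedContraction 𝔭 s) := by
    induction n with
    | zero => exact ⟨∅, by simp⟩
    | succ n ih =>
      obtain ⟨s, hs⟩ := ih
      obtain ⟨t, ht⟩ := step s
      refine ⟨t, ?_⟩
      push_cast
      exact (add_le_add_left hs 1).trans (Order.height_add_one_le ht)
  refine h (ENat.eq_top_iff_forall_ge.2 fun n ↦ ?_)
  obtain ⟨s, hs⟩ := key n
  exact hs.trans (Order.height_mono (extendedContraction_le 𝔭 s))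

open Classical in
theorem comap_inclusionOf_span (S : Finset (MvPolynomial σ R)) (s : Finset σ)
    (hS : ∀ f ∈ S, f.vars ⊆ s) :
    (Ideal.span (S : Set (MvPolynomial σ R))).comap (inclusionOf R s) =
      Ideal.span (S.image (killCompl (R := R) (Subtype.val_injective (p := (· ∈ s))))) := by
  have hk (g : MvPolynomial s R) : killCompl Subtype.val_injective (inclusionOf R s g) = g :=
    killCompl_rename_app _ g
  apply le_antisymm
  · intro f hf
    have := Ideal.mem_map_of_mem (killCompl (R := R) (Subtype.val_injective (p := (· ∈ s))))
      (Ideal.mem_comap.1 hf)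
    rwa [hk, Ideal.map_span, ← Finset.coe_image] at this
  · rw [Ideal.span_le]
    intro f hf
    obtain ⟨g, hg, rfl⟩ := Finset.mem_image.1 hf
    obtain ⟨g, rfl⟩ := exists_inclusionOf_eq (hS g hg)
    rw [hk]
    exact Ideal.subset_span hg

theorem height_le_card_of_eq_span [IsNoetherianRing R] {𝔭 : PrimeSpectrum (MvPolynomial σ R)}
    {S : Finset (MvPolynomial σ R)} (hS : 𝔭.asIdeal = Ideal.span S) :
    Order.height 𝔭 ≤ S.card := by
  classical
  refine Order.height_le fun c hc ↦ ?_
  have hlt (i : Fin c.length) : ∃ f ∈ (c i.succ).asIdeal, f ∉ (c i.castSucc).asIdeal :=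
    SetLike.exists_of_lt (c.step i)
  choose w hw hw' using hlt
  let s : Finset σ := S.biUnion vars ∪ Finset.univ.biUnion fun i ↦ (w i).vars
  have hSs : ∀ f ∈ S, f.vars ⊆ s := fun f hf ↦
    (Finset.subset_biUnion_of_mem vars hf).trans Finset.subset_union_left
  have hws (i) : (w i).vars ⊆ s :=
    (Finset.subset_biUnion_of_mem (fun i ↦ (w i).vars) (Finset.mem_univ i)).trans
      Finset.subset_union_right
  let q (i : Fin (c.length + 1)) : PrimeSpectrum (MvPolynomial s R) :=
    PrimeSpectrum.comap (inclusionOf R s) (c i)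
  have hq : StrictMono q := Fin.strictMono_iff_lt_succ.2 fun i ↦ by
    obtain ⟨g, hg⟩ := exists_inclusionOf_eq (hws i)
    refine lt_of_le_not_ge (Ideal.comap_mono (c.step i).le) fun hle ↦ hw' i ?_
    have hmem : g ∈ (q i.succ).asIdeal := by
      change inclusionOf R s g ∈ (c i.succ).asIdeal
      exact hg ▸ hw i
    rw [← hg]
    exact hle hmem
  have hlen := Order.length_le_height_last (p := LTSeries.mk c.length q hq)
  refine hlen.trans ?_
  have hlast : (LTSeries.mk c.length q hq).last.asIdeal =
      Ideal.span (S.image (killCompl (R := R) (Subtype.val_injective (p := (· ∈ s))))) := by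
    rw [← comap_inclusionOf_span S s hSs, ← hS, ← hc]
    rfl
  rw [← PrimeSpectrum.height_eq_orderHeight]
  refine (Ideal.height_le_card_of_mem_minimalPrimes_span_finset
    (s := S.image (killCompl (R := R) (Subtype.val_injective (p := (· ∈ s))))) ?_).trans
    (Nat.cast_le.2 Finset.card_image_le)
  rw [← hlast, Ideal.minimalPrimes_eq_subsingleton_self]
  rfl

end MvPolynomial

/-- Let `R` be a commutative Noetherian ring and
`A = R[X₁, X₂, …] = MvPolynomial ℕ R` the polynomial ring in countably many
variables. A prime ideal `𝔭` of `A` has finite height iff it is finitely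
generated. Height is `Order.height` of the point of the prime spectrum, i.e.
the sup of lengths of strictly increasing chains of primes ending at `𝔭`. -/
theorem finite_height_iff_fg (R : Type*) [CommRing R] [IsNoetherianRing R]
    (𝔭 : Ideal (MvPolynomial ℕ R)) (hp : 𝔭.IsPrime) :
    Order.height (⟨𝔭, hp⟩ : PrimeSpectrum (MvPolynomial ℕ R)) ≠ ⊤ ↔ 𝔭.FG := by
  refine ⟨fun h ↦ MvPolynomial.fg_of_height_ne_top h, ?_⟩
  rintro ⟨S, hS⟩
  exact ne_top_of_le_ne_top (ENat.natCast_ne_top _)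
    (MvPolynomial.height_le_card_of_eq_span (S := S) hS.symm)
end

section
/- Every finitely presented module N over the polynomial algebra A = ℂ[X₁, X₂, X₃, …] in countably infinitely many variables admits a finite resolution by finite rank free A-modules: there exist a natural number n and an exact sequence 0 → Fₙ → Fₙ₋₁ → ⋯ → F₀ → N → 0 of A-modules in which each Fᵢ is a free A-module of finite rank. -/
open scoped TensorProduct

universe u

/-- `M` has a resolution `0 → Fₙ₋₁ → ⋯ → F₀ → M → 0` by `n` free modules of finite rank,
defined by recursion on `n` through iterated kernels. -/
def HasFiniteFreeResolution (R : Type u) [CommRing R] :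
    ℕ → ∀ (M : Type u) [AddCommGroup M] [Module R M], Prop
  | 0, M, _, _ => Subsingleton M
  | n + 1, M, _, _ => ∃ (r : ℕ) (f : (Fin r → R) →ₗ[R] M),
      Function.Surjective f ∧ HasFiniteFreeResolution R n (LinearMap.ker f)

namespace HasFiniteFreeResolution

variable {R S : Type u} [CommRing R] [CommRing S]

variable {M N P : Type u} [AddCommGroup M] [Module R M] [AddCommGroup N] [Module R N]
  [AddCommGroup P] [Module R P]

/-- Transport along an additive equivalence that is semilinear over a ring equivalence. -/
theorem of_ringEquiv (e : R ≃+* S) {n : ℕ} :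
    ∀ {M N : Type u} [AddCommGroup M] [Module R M] [AddCommGroup N] [Module S N]
      (φ : M ≃+ N) (_ : ∀ (a : R) (m : M), φ (a • m) = e a • φ m)
      (_ : HasFiniteFreeResolution R n M), HasFiniteFreeResolution S n N := by
  induction n with
  | zero =>
    intro M N _ _ _ _ φ _ h
    have : Subsingleton M := h
    exact φ.symm.toEquiv.subsingleton
  | succ n ih =>
    rintro M N _ _ _ _ φ hφ ⟨r, f, hf, h⟩
    let ψ : (Fin r → R) ≃+ (Fin r → S) := AddEquiv.piCongrRight fun _ ↦ e.toAddEquiv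
    have hψ (a : R) (v : Fin r → R) : ψ (a • v) = e a • ψ v := by
      ext i
      simp [ψ]
    let g : (Fin r → S) →ₗ[S] N :=
      { toFun v := φ (f (ψ.symm v))
        map_add' v w := by simp
        map_smul' a v := by
          obtain ⟨v, rfl⟩ := ψ.surjective v
          obtain ⟨a, rfl⟩ := e.surjective a
          simp [← hψ, hφ] }
    have hg (v : Fin r → R) : g (ψ v) = φ (f v) := by simp [g]
    refine ⟨r, g, (φ.surjective.comp hf).comp ψ.symm.surjective, ?_⟩
    refine ih (M := LinearMap.ker f) (N := LinearMap.ker g)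
      { toFun v := ⟨ψ v, by simp [hg]⟩
        invFun w := ⟨ψ.symm w, by
          have := w.2
          rw [LinearMap.mem_ker] at this ⊢
          apply φ.injective
          rw [map_zero, ← this]
          rfl⟩
        left_inv v := by simp
        right_inv w := by simp
        map_add' v w := by ext; simp } ?_ h
    intro a v
    ext1
    exact hψ a v

theorem of_linearEquiv {n : ℕ} (e : M ≃ₗ[R] N) (h : HasFiniteFreeResolution R n M) :
    HasFiniteFreeResolution R n N :=
  of_ringEquiv (RingEquiv.refl R) e.toAddEquiv (by simp) h

theorem of_subsingleton [Subsingleton M] (n : ℕ) : HasFiniteFreeResolution R n M := by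
  induction n generalizing M with
  | zero => exact ‹_›
  | succ n ih => exact ⟨0, 0, fun m ↦ ⟨0, Subsingleton.elim _ _⟩, ih⟩

theorem succ {n : ℕ} (h : HasFiniteFreeResolution R n M) :
    HasFiniteFreeResolution R (n + 1) M := by
  induction n generalizing M with
  | zero =>
    have : Subsingleton M := h
    exact of_subsingleton 1
  | succ n ih =>
    obtain ⟨r, f, hf, h⟩ := h
    exact ⟨r, f, hf, ih h⟩

theorem mono {m n : ℕ} (hmn : m ≤ n) (h : HasFiniteFreeResolution R m M) :
    HasFiniteFreeResolution R n M :=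
  Nat.le_induction h (fun _ _ ↦ succ) n hmn

/-- A finite free module surjecting onto `M` may be used to build a resolution of `M`. -/
theorem of_exact {n : ℕ} {K F : Type u} [AddCommGroup K] [Module R K] [AddCommGroup F]
    [Module R F] [Module.Free R F] [Module.Finite R F] {i : K →ₗ[R] F} {f : F →ₗ[R] M}
    (hi : Function.Injective i) (hif : Function.Exact i f) (hf : Function.Surjective f)
    (h : HasFiniteFreeResolution R n K) : HasFiniteFreeResolution R (n + 1) M := by
  let b := (Module.Free.chooseBasis R F).reindex (Fintype.equivFin _)
  refine ⟨_, f ∘ₗ b.equivFun.symm.toLinearMap, hf.comp b.equivFun.symm.surjective, ?_⟩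
  let i' := b.equivFun.toLinearMap ∘ₗ i
  have hi' : Function.Injective i' := b.equivFun.injective.comp hi
  have hr : LinearMap.range i' = LinearMap.ker (f ∘ₗ b.equivFun.symm.toLinearMap) := by
    ext v
    obtain ⟨v, rfl⟩ := b.equivFun.surjective v
    rw [LinearMap.mem_ker, LinearMap.comp_apply, LinearEquiv.coe_coe,
      LinearEquiv.symm_apply_apply, hif v]
    constructor
    · rintro ⟨k, hk⟩
      exact ⟨k, b.equivFun.injective hk⟩
    · rintro ⟨k, rfl⟩
      exact ⟨k, rfl⟩
  exact of_linearEquiv ((LinearEquiv.ofInjective i' hi').trans (LinearEquiv.ofEq _ _ hr)) h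

theorem of_free [Module.Free R M] [Module.Finite R M] : HasFiniteFreeResolution R 1 M :=
  of_exact (K := PUnit) (i := 0) (f := LinearMap.id) (Function.injective_of_subsingleton _)
    (by intro x; simp [eq_comm]) Function.surjective_id
    (of_subsingleton 0)

/-- The horseshoe lemma. -/
theorem of_extension {n : ℕ} {f : M →ₗ[R] N} {g : N →ₗ[R] P} (hf : Function.Injective f)
    (hfg : Function.Exact f g) (hg : Function.Surjective g)
    (hM : HasFiniteFreeResolution R n M) (hP : HasFiniteFreeResolution R n P) :
    HasFiniteFreeResolution R n N := by
  induction n generalizing M N P with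
  | zero =>
    have : Subsingleton M := hM
    have : Subsingleton P := hP
    refine subsingleton_of_forall_eq (0 : N) fun x ↦ ?_
    obtain ⟨m, rfl⟩ := (hfg x).1 (Subsingleton.elim _ _)
    rw [Subsingleton.elim m 0, map_zero]
  | succ n ih =>
    obtain ⟨r, p, hp, hM⟩ := hM
    obtain ⟨s, q, hq, hP⟩ := hP
    obtain ⟨l, hl⟩ := Module.projective_lifting_property g q hg
    have hl' (v) : g (l v) = q v := LinearMap.congr_fun hl v
    have hgf (m) : g (f m) = 0 := (hfg _).2 ⟨m, rfl⟩
    let t : (Fin r → R) × (Fin s → R) →ₗ[R] N := (f ∘ₗ p).coprod l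
    have ht (v w) : t (v, w) = f (p v) + l w := by simp [t]
    have hts : Function.Surjective t := by
      intro x
      obtain ⟨w, hw⟩ := hq (g x)
      obtain ⟨m, hm⟩ := (hfg (x - l w)).1 (by simp [hl', hw])
      obtain ⟨v, rfl⟩ := hp m
      exact ⟨(v, w), by simp [ht, hm]⟩
    refine of_exact (i := (LinearMap.ker t).subtype) (Submodule.injective_subtype _)
      (LinearMap.exact_subtype_ker_map t) hts ?_
    let f' : LinearMap.ker p →ₗ[R] LinearMap.ker t :=
      ((LinearMap.inl R _ _) ∘ₗ (LinearMap.ker p).subtype).codRestrict _ fun v ↦ by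
        have := v.2
        rw [LinearMap.mem_ker] at this
        simp [ht, this]
    have key (x : LinearMap.ker t) : f (p x.1.1) + l x.1.2 = 0 := by
      rw [← ht]
      exact x.2
    let g' : LinearMap.ker t →ₗ[R] LinearMap.ker q :=
      ((LinearMap.snd R _ _) ∘ₗ (LinearMap.ker t).subtype).codRestrict _ fun x ↦ by
        simpa [hgf, hl'] using congrArg g (key x)
    refine ih (f := f') (g := g') ?_ ?_ ?_ hM hP
    · intro v w h
      exact Subtype.ext (congrArg (fun x ↦ x.1.1) h)
    · intro x
      constructor
      · intro hx
        have hx2 : x.1.2 = 0 := congrArg Subtype.val hx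
        refine ⟨⟨x.1.1, hf ?_⟩, ?_⟩
        · simpa [hx2] using key x
        · exact Subtype.ext (Prod.ext rfl hx2.symm)
      · rintro ⟨v, rfl⟩
        rfl
    · rintro ⟨w, hw⟩
      rw [LinearMap.mem_ker] at hw
      obtain ⟨m, hm⟩ := (hfg (l w)).1 (by rw [hl', hw])
      obtain ⟨v, rfl⟩ := hp m
      exact ⟨⟨(-v, w), by simp [ht, hm]⟩, rfl⟩

/-- The mapping cone: the cokernel of an injection between resolved modules is resolved. -/
theorem of_cokernel {n : ℕ} {f : M →ₗ[R] N} {g : N →ₗ[R] P} (hf : Function.Injective f)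
    (hfg : Function.Exact f g) (hg : Function.Surjective g)
    (hM : HasFiniteFreeResolution R n M) (hN : HasFiniteFreeResolution R n N) :
    HasFiniteFreeResolution R (n + 1) P := by
  cases n with
  | zero =>
    have : Subsingleton N := hN
    have := hg.subsingleton
    exact of_subsingleton 1
  | succ n =>
    obtain ⟨r, p, hp, hN⟩ := hN
    refine ⟨r, g ∘ₗ p, hg.comp hp, ?_⟩
    let i : LinearMap.ker p →ₗ[R] LinearMap.ker (g ∘ₗ p) :=
      Submodule.inclusion (LinearMap.ker_le_ker_comp p g)
    have hpm (x : LinearMap.ker (g ∘ₗ p)) : p x ∈ LinearMap.range f := (hfg _).1 x.2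
    let j : LinearMap.ker (g ∘ₗ p) →ₗ[R] LinearMap.range f :=
      (p ∘ₗ Submodule.subtype _).codRestrict _ hpm
    refine of_extension (f := i) (g := j) (Submodule.inclusion_injective _) ?_ ?_ hN.succ
      (of_linearEquiv (LinearEquiv.ofInjective f hf) hM)
    · intro x
      constructor
      · intro hx
        exact ⟨⟨x.1, congrArg Subtype.val hx⟩, rfl⟩
      · rintro ⟨v, rfl⟩
        exact Subtype.ext v.2
    · rintro ⟨_, m, rfl⟩
      obtain ⟨v, hv⟩ := hp (f m)
      exact ⟨⟨v, by simpa [hv] using (hfg _).2 ⟨m, rfl⟩⟩, Subtype.ext hv⟩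

theorem baseChange [Algebra R S] [Module.Flat R S] {n : ℕ}
    (h : HasFiniteFreeResolution R n M) : HasFiniteFreeResolution S n (S ⊗[R] M) := by
  induction n generalizing M with
  | zero =>
    have : Subsingleton M := h
    exact (inferInstance : Subsingleton (S ⊗[R] M))
  | succ n ih =>
    obtain ⟨r, f, hf, h⟩ := h
    exact of_exact (i := (LinearMap.ker f).subtype.baseChange S) (f := f.baseChange S)
      (Module.Flat.lTensor_preserves_injective_linearMap _ (Submodule.injective_subtype _))
      (lTensor_exact S (LinearMap.exact_subtype_ker_map f) hf)
      (LinearMap.lTensor_surjective S hf) (ih h)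

/-- A resolution by iterated kernels assembles into a long exact sequence. -/
theorem exists_complex {n : ℕ} (h : HasFiniteFreeResolution R n M) :
    ∃ (r : ℕ → ℕ) (d : ∀ i : ℕ, (Fin (r (i + 1)) → R) →ₗ[R] (Fin (r i) → R))
      (ε : (Fin (r 0) → R) →ₗ[R] M),
      Function.Surjective ε ∧ LinearMap.range (d 0) = LinearMap.ker ε ∧
      (∀ i : ℕ, LinearMap.range (d (i + 1)) = LinearMap.ker (d i)) ∧
      (∀ i : ℕ, n ≤ i → r i = 0) := by
  induction n generalizing M with
  | zero =>
    have : Subsingleton M := h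
    exact ⟨fun _ ↦ 0, fun _ ↦ 0, 0, fun m ↦ ⟨0, Subsingleton.elim _ _⟩,
      Subsingleton.elim _ _, fun _ ↦ Subsingleton.elim _ _, fun _ _ ↦ rfl⟩
  | succ n ih =>
    obtain ⟨r₀, f, hf, h⟩ := h
    obtain ⟨r, d, ε, hε, hd₀, hd, hr⟩ := ih h
    refine ⟨fun i ↦ Nat.casesOn i r₀ r,
      fun i ↦ Nat.casesOn i ((LinearMap.ker f).subtype ∘ₗ ε) d, f, hf, ?_, ?_, ?_⟩
    · change LinearMap.range ((LinearMap.ker f).subtype ∘ₗ ε) = _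
      rw [LinearMap.range_comp_of_range_eq_top _ (LinearMap.range_eq_top.2 hε),
        Submodule.range_subtype]
    · rintro (_ | i)
      · change LinearMap.range (d 0) = LinearMap.ker ((LinearMap.ker f).subtype ∘ₗ ε)
        rw [LinearMap.ker_comp_of_ker_eq_bot _ (Submodule.ker_subtype _), hd₀]
      · exact hd i
    · rintro (_ | i) hi
      · omega
      · exact hr i (by omega)

end HasFiniteFreeResolution

open Polynomial in
/-- Coefficients of an element of `R[X] ⊗ M`. -/
noncomputable def tensorCoeff (R M : Type*) [CommRing R] [AddCommGroup M] [Module R M] :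
    R[X] ⊗[R] M ≃ₗ[R] ℕ →₀ M :=
  TensorProduct.equivFinsuppOfBasisLeft (Polynomial.basisMonomials R)

section TensorCoeff

open Polynomial

variable {R M N : Type*} [CommRing R] [AddCommGroup M] [Module R M] [AddCommGroup N] [Module R N]

theorem tensorCoeff_tmul (p : R[X]) (m : M) (i : ℕ) :
    tensorCoeff R M (p ⊗ₜ m) i = p.coeff i • m := by
  rw [tensorCoeff, TensorProduct.equivFinsuppOfBasisLeft_apply_tmul_apply]
  rfl

theorem tensorCoeff_baseChange (f : M →ₗ[R] N) (t : R[X] ⊗[R] M) (i : ℕ) :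
    tensorCoeff R N (f.baseChange R[X] t) i = f (tensorCoeff R M t i) := by
  induction t with
  | zero => simp
  | tmul p m => simp [tensorCoeff_tmul]
  | add x y hx hy => simp [hx, hy]

theorem tensorCoeff_X_smul_zero (t : R[X] ⊗[R] M) :
    tensorCoeff R M ((X : R[X]) • t) 0 = 0 := by
  induction t with
  | zero => simp
  | tmul p m => simp [TensorProduct.smul_tmul', tensorCoeff_tmul]
  | add x y hx hy => simp [smul_add, hx, hy]

theorem tensorCoeff_X_smul_succ (t : R[X] ⊗[R] M) (i : ℕ) :
    tensorCoeff R M ((X : R[X]) • t) (i + 1) = tensorCoeff R M t i := by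
  induction t with
  | zero => simp
  | tmul p m => simp [TensorProduct.smul_tmul', tensorCoeff_tmul]
  | add x y hx hy => simp [smul_add, hx, hy]

theorem exists_eq_sum_X_pow_tmul (t : R[X] ⊗[R] M) :
    ∃ (k : ℕ) (m : ℕ → M), t = ∑ i ∈ Finset.range k, ((X : R[X]) ^ i) ⊗ₜ m i := by
  obtain ⟨c, rfl⟩ := TensorProduct.eq_repr_basis_left (Polynomial.basisMonomials R) t
  obtain ⟨k, hk⟩ := c.support.exists_nat_subset_range
  refine ⟨k, c, ?_⟩
  rw [Finsupp.sum_of_support_subset _ hk _ (by simp)]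
  simp [Polynomial.X_pow_eq_monomial]

end TensorCoeff

section DegreeFiltration

open Polynomial

variable {R : Type*} [CommRing R] {r : ℕ}

/-- The elements of `K ⊆ R[X]ʳ` all of whose entries have degree less than `d`. -/
noncomputable def degreeLTPart (K : Submodule R[X] (Fin r → R[X])) (d : ℕ) :
    Submodule R (Fin r → R[X]) :=
  K.restrictScalars R ⊓ Submodule.pi Set.univ fun _ ↦ degreeLT R d

variable {K : Submodule R[X] (Fin r → R[X])} {d : ℕ}

theorem mem_degreeLTPart {v : Fin r → R[X]} :
    v ∈ degreeLTPart K d ↔ v ∈ K ∧ ∀ j n, d ≤ n → (v j).coeff n = 0 := by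
  simp [degreeLTPart, Submodule.mem_pi, mem_degreeLT, degree_lt_iff_coeff_zero]

theorem degreeLTPart_finite [IsNoetherianRing R] (K : Submodule R[X] (Fin r → R[X])) (d : ℕ) :
    Module.Finite R (degreeLTPart K d) := by
  let f : degreeLTPart K d →ₗ[R] Fin r → Fin d → R :=
    { toFun v j n := (v.1 j).coeff n
      map_add' v w := by ext; simp
      map_smul' a v := by ext; simp }
  refine Module.Finite.of_injective f fun v w h ↦ ?_
  ext j n
  by_cases hn : n < d
  · exact congrFun (congrFun h j) ⟨n, hn⟩
  · rw [(mem_degreeLTPart.1 v.2).2 j n (by omega), (mem_degreeLTPart.1 w.2).2 j n (by omega)]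

theorem degreeLTPart_mono {d e : ℕ} (h : d ≤ e) : degreeLTPart K d ≤ degreeLTPart K e :=
  fun _ hv ↦ mem_degreeLTPart.2 ⟨(mem_degreeLTPart.1 hv).1,
    fun j n hn ↦ (mem_degreeLTPart.1 hv).2 j n (h.trans hn)⟩

theorem X_pow_smul_mem_degreeLTPart_iff {v : Fin r → R[X]} (hv : v ∈ K) (k : ℕ) :
    (X : R[X]) ^ k • v ∈ degreeLTPart K (d + k) ↔ v ∈ degreeLTPart K d := by
  simp only [mem_degreeLTPart, K.smul_mem _ hv, hv, true_and, Pi.smul_apply, smul_eq_mul]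
  refine forall_congr' fun j ↦ ⟨fun h n hn ↦ ?_, fun h n hn ↦ ?_⟩
  · rw [← h (n + k) (by omega), coeff_X_pow_mul]
  · obtain ⟨n, rfl⟩ := Nat.exists_eq_add_of_le' (show k ≤ n by omega)
    rw [coeff_X_pow_mul, h n (by omega)]

theorem exists_span_degreeLTPart_eq (hK : K.FG) :
    ∃ d, Submodule.span R[X] (degreeLTPart K d : Set (Fin r → R[X])) = K := by
  obtain ⟨s, rfl⟩ := hK
  let d := s.sup fun v ↦ Finset.univ.sup fun j ↦ (v j).natDegree + 1
  refine ⟨d, le_antisymm (Submodule.span_le.2 fun v hv ↦ (mem_degreeLTPart.1 hv).1) ?_⟩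
  refine Submodule.span_mono fun v hv ↦ mem_degreeLTPart.2
    ⟨Submodule.subset_span hv, fun j n hn ↦ coeff_eq_zero_of_natDegree_lt ?_⟩
  have h₁ : (v j).natDegree + 1 ≤ Finset.univ.sup fun j ↦ (v j).natDegree + 1 :=
    Finset.le_sup (f := fun j ↦ (v j).natDegree + 1) (Finset.mem_univ j)
  have h₂ := Finset.le_sup (f := fun v : Fin r → R[X] ↦
    Finset.univ.sup fun j ↦ (v j).natDegree + 1) hv
  exact (h₁.trans h₂).trans hn

variable (K d)

/-- Multiplication by `X` raises the degree by one. -/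
noncomputable def degreeLTPartMulX : degreeLTPart K d →ₗ[R] degreeLTPart K (d + 1) where
  toFun v := ⟨(X : R[X]) • v.1, by
    simpa using (X_pow_smul_mem_degreeLTPart_iff (mem_degreeLTPart.1 v.2).1 1).2 v.2⟩
  map_add' v w := by ext1; simp
  map_smul' a v := Subtype.ext (smul_comm (X : R[X]) a v.1)

/-- The map `p ⊗ v ↦ X p ⊗ v - p ⊗ X v`. -/
noncomputable def degreeLTPartRelation :
    R[X] ⊗[R] degreeLTPart K d →ₗ[R[X]] R[X] ⊗[R] degreeLTPart K (d + 1) :=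
  (X : R[X]) • (Submodule.inclusion (degreeLTPart_mono d.le_succ)).baseChange R[X] -
    (degreeLTPartMulX K d).baseChange R[X]

/-- The map `p ⊗ v ↦ p v`. -/
noncomputable def degreeLTPartEval : R[X] ⊗[R] degreeLTPart K d →ₗ[R[X]] K :=
  LinearMap.liftBaseChange R[X]
    { toFun v := ⟨v.1, (mem_degreeLTPart.1 v.2).1⟩
      map_add' _ _ := rfl
      map_smul' _ _ := rfl }

variable {K d}

theorem degreeLTPartEval_tmul (p : R[X]) (v : degreeLTPart K d) :
    (degreeLTPartEval K d (p ⊗ₜ v) : Fin r → R[X]) = p • (v : Fin r → R[X]) := by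
  simp [degreeLTPartEval]

theorem degreeLTPartRelation_tmul (p : R[X]) (v : degreeLTPart K d) :
    degreeLTPartRelation K d (p ⊗ₜ v) =
      (X * p) ⊗ₜ Submodule.inclusion (degreeLTPart_mono d.le_succ) v -
        p ⊗ₜ degreeLTPartMulX K d v := by
  simp [degreeLTPartRelation, TensorProduct.smul_tmul']

theorem degreeLTPartMulX_injective : Function.Injective (degreeLTPartMulX K d) := by
  intro v w h
  ext j n
  simpa [degreeLTPartMulX] using congrArg (fun z ↦ (z.1 j).coeff (n + 1)) h

theorem degreeLTPartRelation_injective : Function.Injective (degreeLTPartRelation K d) := by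
  refine (injective_iff_map_eq_zero _).2 fun t ht ↦ ?_
  have h : (X : R[X]) • (Submodule.inclusion (degreeLTPart_mono d.le_succ)).baseChange R[X] t =
      (degreeLTPartMulX K d).baseChange R[X] t := sub_eq_zero.1 ht
  apply (tensorCoeff R _).injective
  ext1 i
  rw [map_zero, Finsupp.zero_apply]
  induction i with
  | zero =>
    apply degreeLTPartMulX_injective
    rw [← tensorCoeff_baseChange, ← h, tensorCoeff_X_smul_zero, map_zero]
  | succ i ih =>
    apply degreeLTPartMulX_injective
    rw [← tensorCoeff_baseChange, ← h, tensorCoeff_X_smul_succ, tensorCoeff_baseChange, ih,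
      map_zero, map_zero]

theorem X_pow_smul_mem_of_le {v : Fin r → R[X]} (hv : v ∈ degreeLTPart K d) {k e : ℕ}
    (h : d + k ≤ e) : (X : R[X]) ^ k • v ∈ degreeLTPart K e :=
  degreeLTPart_mono h ((X_pow_smul_mem_degreeLTPart_iff (mem_degreeLTPart.1 hv).1 k).2 hv)

theorem sum_X_pow_tmul_mem_range (k : ℕ) (m : ℕ → degreeLTPart K (d + 1))
    (b : degreeLTPart K (d + 1))
    (h : ∑ i ∈ Finset.range k, (X : R[X]) ^ i • (m i : Fin r → R[X]) +
      (X : R[X]) ^ k • (b : Fin r → R[X]) = 0) :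
    ∑ i ∈ Finset.range k, ((X : R[X]) ^ i) ⊗ₜ[R] m i + ((X : R[X]) ^ k) ⊗ₜ[R] b ∈
      LinearMap.range (degreeLTPartRelation K d) := by
  induction k generalizing b with
  | zero =>
    have : b = 0 := Subtype.ext (by simpa using h)
    simp [this]
  | succ k ih =>
    have hb : (b : Fin r → R[X]) ∈ degreeLTPart K d := by
      refine (X_pow_smul_mem_degreeLTPart_iff (mem_degreeLTPart.1 b.2).1 (k + 1)).1 ?_
      rw [eq_neg_of_add_eq_zero_right h]
      refine neg_mem (sum_mem fun i hi ↦ X_pow_smul_mem_of_le (m i).2 ?_)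
      have := Finset.mem_range.1 hi
      omega
    obtain ⟨t, ht⟩ := ih (m k + degreeLTPartMulX K d ⟨b, hb⟩) (by
      rw [← h, Finset.sum_range_succ, pow_succ]
      simp [degreeLTPartMulX, smul_add, mul_smul, add_assoc])
    refine ⟨t + (X ^ k) ⊗ₜ ⟨b, hb⟩, ?_⟩
    rw [map_add, ht, degreeLTPartRelation_tmul, Finset.sum_range_succ, TensorProduct.tmul_add,
      ← pow_succ']
    have : Submodule.inclusion (degreeLTPart_mono d.le_succ) ⟨b, hb⟩ = b := rfl
    rw [this]
    abel

theorem degreeLTPart_exact :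
    Function.Exact (degreeLTPartRelation K d) (degreeLTPartEval K (d + 1)) := by
  intro t
  constructor
  · intro ht
    obtain ⟨k, m, rfl⟩ := exists_eq_sum_X_pow_tmul t
    have := sum_X_pow_tmul_mem_range k m 0 (by
      simpa [degreeLTPartEval_tmul] using congrArg Subtype.val ht)
    simpa using this
  · rintro ⟨t, rfl⟩
    induction t with
    | zero => simp
    | tmul p v =>
      ext1
      rw [degreeLTPartRelation_tmul, map_sub, Submodule.coe_sub, degreeLTPartEval_tmul,
        degreeLTPartEval_tmul]
      simp [degreeLTPartMulX, smul_smul, mul_comm]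
    | add x y hx hy => rw [map_add, map_add, hx, hy, add_zero]

theorem degreeLTPartEval_surjective
    (h : Submodule.span R[X] (degreeLTPart K d : Set (Fin r → R[X])) = K) :
    Function.Surjective (degreeLTPartEval K d) := by
  rw [← LinearMap.range_eq_top, ← (Submodule.map_injective_of_injective
    K.injective_subtype).eq_iff, Submodule.map_subtype_top]
  refine le_antisymm (Submodule.map_subtype_le _ _) ?_
  conv_lhs => rw [← h]
  refine Submodule.span_le.2 fun v hv ↦ ?_
  exact ⟨_, ⟨1 ⊗ₜ ⟨v, hv⟩, rfl⟩, by simp [degreeLTPartEval_tmul]⟩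

end DegreeFiltration

/-- Every finite module has a finite resolution by finite free modules. -/
def FiniteModulesHaveResolutions (R : Type u) [CommRing R] : Prop :=
  ∀ (M : Type u) [AddCommGroup M] [Module R M] [Module.Finite R M],
    ∃ n, HasFiniteFreeResolution R n M

namespace FiniteModulesHaveResolutions

theorem of_field (k : Type u) [Field k] : FiniteModulesHaveResolutions k :=
  fun _ _ _ _ ↦ ⟨1, .of_free⟩

theorem of_ringEquiv {R S : Type u} [CommRing R] [CommRing S] (e : R ≃+* S)
    (h : FiniteModulesHaveResolutions R) : FiniteModulesHaveResolutions S := by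
  intro M _ _ _
  let : Algebra R S := e.toRingHom.toAlgebra
  let : Module R M := Module.compHom M e.toRingHom
  have : IsScalarTower R S M := ⟨fun a s m ↦ mul_smul (e a) s m⟩
  have : Module.Finite R S := Module.Finite.of_surjective (Algebra.linearMap R S) e.surjective
  have : Module.Finite R M := Module.Finite.trans S M
  obtain ⟨n, hn⟩ := h M
  exact ⟨n, .of_ringEquiv e (AddEquiv.refl M) (fun _ _ ↦ rfl) hn⟩

theorem polynomial {R : Type u} [CommRing R] [IsNoetherianRing R]
    (h : FiniteModulesHaveResolutions R) : FiniteModulesHaveResolutions (Polynomial R) := by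
  intro M _ _ _
  obtain ⟨r, f, hf⟩ := Module.Finite.exists_fin' (Polynomial R) M
  obtain ⟨d, hd⟩ := exists_span_degreeLTPart_eq (IsNoetherian.noetherian (LinearMap.ker f))
  have hd' : Submodule.span (Polynomial R)
      (degreeLTPart (LinearMap.ker f) (d + 1) : Set (Fin r → Polynomial R)) = LinearMap.ker f :=
    le_antisymm (Submodule.span_le.2 fun v hv ↦ (mem_degreeLTPart.1 hv).1)
      (hd.symm.le.trans (Submodule.span_mono (degreeLTPart_mono d.le_succ)))
  have := degreeLTPart_finite (LinearMap.ker f) d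
  have := degreeLTPart_finite (LinearMap.ker f) (d + 1)
  obtain ⟨m, hm⟩ := h (degreeLTPart (LinearMap.ker f) d)
  obtain ⟨n, hn⟩ := h (degreeLTPart (LinearMap.ker f) (d + 1))
  exact ⟨max m n + 1 + 1, r, f, hf, .of_cokernel degreeLTPartRelation_injective degreeLTPart_exact
    (degreeLTPartEval_surjective hd') (hm.baseChange.mono (le_max_left m n))
    (hn.baseChange.mono (le_max_right m n))⟩

theorem mvPolynomial_fin (k : Type u) [Field k] (n : ℕ) :
    FiniteModulesHaveResolutions (MvPolynomial (Fin n) k) := by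
  induction n with
  | zero =>
    exact (of_field k).of_ringEquiv (MvPolynomial.isEmptyAlgEquiv k (Fin 0)).symm.toRingEquiv
  | succ n ih => exact ih.polynomial.of_ringEquiv (MvPolynomial.finSuccEquiv k n).symm.toRingEquiv

theorem mvPolynomial {k σ : Type u} [Field k] [Finite σ] :
    FiniteModulesHaveResolutions (MvPolynomial σ k) := by
  obtain ⟨n, ⟨e⟩⟩ := Finite.exists_equiv_fin σ
  exact (mvPolynomial_fin k n).of_ringEquiv (MvPolynomial.renameEquiv k e.symm).toRingEquiv

end FiniteModulesHaveResolutions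


open MvPolynomial in
/-- A polynomial ring is flat over the polynomial ring on a subset of the variables. -/
theorem flat_rename_coe {σ k : Type*} [CommRing k] (s : Set σ) :
    (rename (R := k) ((↑) : s → σ)).toRingHom.Flat := by
  classical
  let e : MvPolynomial σ k ≃ₐ[k] MvPolynomial (sᶜ : Set σ) (MvPolynomial s k) :=
    (renameEquiv k ((Equiv.sumComm _ _).trans (Equiv.Set.sumCompl s)).symm).trans
      (sumAlgEquiv k _ _)
  have he : e.toAlgHom.comp (rename (R := k) ((↑) : s → σ)) =
      IsScalarTower.toAlgHom k (MvPolynomial s k) _ := by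
    ext1 i
    simp [e]
  have hC : (C : MvPolynomial s k →+* MvPolynomial (sᶜ : Set σ) (MvPolynomial s k)).Flat :=
    RingHom.flat_algebraMap_iff.2 inferInstance
  have : (rename (R := k) ((↑) : s → σ)).toRingHom = e.symm.toAlgHom.toRingHom.comp C := by
    refine RingHom.ext fun p ↦ ?_
    exact (e.symm_apply_eq.2 (AlgHom.congr_fun he p).symm).symm
  rw [this]
  exact hC.comp (.of_bijective e.symm.bijective)

/-- Submodules of `Rʳ` extend to `Sʳ` along a flat algebra with their resolutions. -/
theorem HasFiniteFreeResolution.span_algebraMap {R S : Type u} [CommRing R] [CommRing S]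
    [Algebra R S] [Module.Flat R S] {r n : ℕ} {s : Set (Fin r → R)}
    (h : HasFiniteFreeResolution R n (Submodule.span R s)) :
    HasFiniteFreeResolution S n
      (Submodule.span S ((fun v i ↦ algebraMap R S (v i)) '' s)) := by
  let j : S ⊗[R] Submodule.span R s →ₗ[S] (Fin r → S) :=
    (TensorProduct.piScalarRight R S S (Fin r)).toLinearMap ∘ₗ
      (Submodule.span R s).subtype.baseChange S
  have hj : Function.Injective j :=
    (TensorProduct.piScalarRight R S S (Fin r)).injective.comp
      (Module.Flat.lTensor_preserves_injective_linearMap _ (Submodule.injective_subtype _))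
  have hj' (a : S) (v : Submodule.span R s) : j (a ⊗ₜ v) = a • fun i ↦ algebraMap R S (v.1 i) := by
    ext i
    simp [j, Algebra.smul_def, mul_comm]
  refine .of_linearEquiv ((LinearEquiv.ofInjective j hj).trans (LinearEquiv.ofEq _ _ ?_))
    (h.baseChange (S := S))
  apply le_antisymm
  · rintro _ ⟨t, rfl⟩
    induction t with
    | zero => simp
    | tmul a v =>
      rw [hj']
      refine Submodule.smul_mem _ _ ?_
      have : Submodule.span R s ≤ (Submodule.span S ((fun v i ↦ algebraMap R S (v i)) '' s)
          |>.restrictScalars R).comap ((Algebra.linearMap R S).compLeft (Fin r)) :=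
        Submodule.span_le.2 fun w hw ↦ Submodule.subset_span ⟨w, hw, rfl⟩
      exact this v.2
    | add x y hx hy => rw [map_add]; exact add_mem hx hy
  · refine Submodule.span_le.2 ?_
    rintro _ ⟨v, hv, rfl⟩
    exact ⟨1 ⊗ₜ ⟨v, Submodule.subset_span hv⟩, by simp [hj']⟩

open MvPolynomial in
/-- A finitely generated submodule of a finite free module involves finitely many variables,
hence descends to a Noetherian polynomial ring. -/
theorem HasFiniteFreeResolution.of_fg_mvPolynomial {k σ : Type u} [Field k] {r : ℕ}
    {K : Submodule (MvPolynomial σ k) (Fin r → MvPolynomial σ k)} (hK : K.FG) :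
    ∃ n, HasFiniteFreeResolution (MvPolynomial σ k) n K := by
  classical
  obtain ⟨t, rfl⟩ := hK
  let s : Finset σ := t.biUnion fun v ↦ Finset.univ.biUnion fun i ↦ (v i).vars
  let : Algebra (MvPolynomial s k) (MvPolynomial σ k) :=
    (rename (R := k) ((↑) : s → σ)).toRingHom.toAlgebra
  have : Module.Flat (MvPolynomial s k) (MvPolynomial σ k) := flat_rename_coe (s : Set σ)
  have hlift : ∀ v ∈ t, ∃ w : Fin r → MvPolynomial s k,
      (fun i ↦ algebraMap _ (MvPolynomial σ k) (w i)) = v := by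
    intro v hv
    have (i : Fin r) : ∃ q : MvPolynomial s k, rename (↑) q = v i := by
      refine exists_rename_eq_of_vars_subset_range (v i) _ Subtype.val_injective fun x hx ↦ ?_
      refine ⟨⟨x, ?_⟩, rfl⟩
      simp only [s, Finset.mem_biUnion]
      exact ⟨v, hv, i, Finset.mem_univ i, hx⟩
    choose w hw using this
    exact ⟨w, funext hw⟩
  choose! w hw using hlift
  have := Module.Finite.span_of_finite (MvPolynomial s k) (t.finite_toSet.image w)
  obtain ⟨n, hn⟩ := FiniteModulesHaveResolutions.mvPolynomial (k := k) (σ := s)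
    (Submodule.span (MvPolynomial s k) (w '' t))
  refine ⟨n, ?_⟩
  have := hn.span_algebraMap (S := MvPolynomial σ k)
  rwa [Set.image_image, Set.image_congr hw, Set.image_id'] at this

open MvPolynomial

/-- Every finitely presented module `N` over
`A = ℂ[X₁, X₂, …] = MvPolynomial ℕ ℂ` admits a finite resolution by finite
rank free `A`-modules: there are `n`, ranks `r i` (with `r i = 0` for `i > n`),
maps `d i : A^{r (i+1)} → A^{r i}` and `ε : A^{r 0} → N` forming an exact
sequence `0 → Fₙ → ⋯ → F₀ → N → 0`. -/
theorem finitePresentation_has_finite_free_resolution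
    (N : Type) [AddCommGroup N] [Module (MvPolynomial ℕ ℂ) N]
    [Module.FinitePresentation (MvPolynomial ℕ ℂ) N] :
    ∃ (n : ℕ) (r : ℕ → ℕ)
      (d : ∀ i : ℕ, ((Fin (r (i + 1)) → MvPolynomial ℕ ℂ) →ₗ[MvPolynomial ℕ ℂ]
        (Fin (r i) → MvPolynomial ℕ ℂ)))
      (ε : (Fin (r 0) → MvPolynomial ℕ ℂ) →ₗ[MvPolynomial ℕ ℂ] N),
      Function.Surjective ε ∧
      LinearMap.range (d 0) = LinearMap.ker ε ∧
      (∀ i : ℕ, LinearMap.range (d (i + 1)) = LinearMap.ker (d i)) ∧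
      (∀ i : ℕ, n < i → r i = 0) := by
  obtain ⟨r, f, hf⟩ := Module.Finite.exists_fin' (MvPolynomial ℕ ℂ) N
  obtain ⟨n, hn⟩ := HasFiniteFreeResolution.of_fg_mvPolynomial
    (Module.FinitePresentation.fg_ker f hf)
  have h : HasFiniteFreeResolution (MvPolynomial ℕ ℂ) (n + 1) N := ⟨r, f, hf, hn⟩
  obtain ⟨r, d, ε, hε, hd₀, hd, hr⟩ := h.exists_complex
  exact ⟨n, r, d, ε, hε, hd₀, hd, fun i hi ↦ hr i hi⟩
end

section
/- Let A = ℂ[X₁, X₂, X₃, …] be the polynomial algebra over ℂ in countably infinitely many variables. For any nonzero finitely presented A-module N, there exists a prime ideal 𝔭 of A of finite height such that the localization N_𝔭 of N at 𝔭 is nonzero. -/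
namespace MvPolynomial

/-- A polynomial ring is free over the subalgebra of polynomials in a given set of variables. -/
theorem free_supported {σ k : Type*} [CommRing k] (s : Set σ) :
    Module.Free (supported k s) (MvPolynomial σ k) := by
  classical
  let ψ : MvPolynomial (sᶜ : Set σ) (supported k s) →ₐ[supported k s] MvPolynomial σ k :=
    aeval fun i => X (i : σ)
  let e : MvPolynomial (sᶜ : Set σ) (supported k s) ≃ₐ[k] MvPolynomial σ k :=
    (mapAlgEquiv (sᶜ : Set σ) (supportedEquivMvPolynomial (R := k) s)).trans <|
      (sumAlgEquiv k (sᶜ : Set σ) s).symm.trans <|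
        renameEquiv k ((Equiv.sumComm _ _).trans (Equiv.Set.sumCompl s))
  have hsupp : ∀ q : MvPolynomial s k,
      (supportedEquivMvPolynomial (R := k) s).symm q = (rename (Subtype.val : s → σ) q) := by
    intro q
    simp [supportedEquivMvPolynomial]
  have hinr : ∀ q : MvPolynomial s k,
      (sumAlgEquiv k (sᶜ : Set σ) s).symm (C q) = rename Sum.inr q := by
    intro q
    rw [AlgEquiv.symm_apply_eq]
    exact (DFunLike.congr_fun (sumAlgEquiv_comp_rename_inr (R := k)
      (S₁ := (sᶜ : Set σ)) (S₂ := s)) q).symm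
  have hC : ∀ r, ψ (C r) = e (C r) := by
    intro r
    obtain ⟨q, rfl⟩ := (supportedEquivMvPolynomial (R := k) s).symm.surjective r
    simp [ψ, e, hinr, rename_rename, hsupp]
    rfl
  have hX : ∀ i, ψ (X i) = e (X i) := fun i => by simp [ψ, e]
  have hψ : ∀ x, ψ x = e x := by
    intro x
    induction x using induction_on with
    | C r => exact hC r
    | add x y hx hy => rw [map_add, map_add, hx, hy]
    | mul_X x i hx => rw [map_mul, map_mul, hx, hX]
  have hbij : Function.Bijective ψ := by
    rw [show (ψ : _ → MvPolynomial σ k) = e from _root_.funext hψ]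
    exact e.bijective
  exact Module.Free.of_equiv (AlgEquiv.ofBijective ψ hbij).toLinearEquiv

theorem isNoetherianRing_supported {σ k : Type*} [CommRing k] [IsNoetherianRing k]
    {s : Set σ} (hs : s.Finite) : IsNoetherianRing (supported k s) := by
  have := hs.to_subtype
  exact isNoetherianRing_of_ringEquiv _
    (supportedEquivMvPolynomial (R := k) s).symm.toRingEquiv

end MvPolynomial

/-- A submodule of a finite free module spanned by vectors defined over a base ring `R` contains
the coordinates of its elements with respect to an `R`-basis of the ring. -/
theorem Submodule.repr_mem_span_image {R A ι κ : Type*} [CommRing R] [CommRing A]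
    [Algebra R A] (b : Module.Basis κ R A) (V : Set (ι → R)) (j : κ) {x : ι → A}
    (hx : x ∈ Submodule.span A ((fun v i => algebraMap R A (v i)) '' V)) :
    (fun i => algebraMap R A (b.repr (x i) j)) ∈
      Submodule.span A ((fun v i => algebraMap R A (v i)) '' V) := by
  induction hx using Submodule.closure_induction with
  | zero => simp [← Pi.zero_def]
  | add x y _ _ hx hy =>
    convert! add_mem hx hy using 1
    ext i
    simp
  | smul_mem a x hx =>
    obtain ⟨v, hv, rfl⟩ := hx
    convert! Submodule.smul_mem _ (algebraMap R A (b.repr a j))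
      (Submodule.subset_span (Set.mem_image_of_mem _ hv)) using 1
    ext i
    have : a * algebraMap R A (v i) = v i • a := by rw [Algebra.smul_def, mul_comm]
    simp [this, mul_comm]

/-- The annihilator of a quotient of a finite free module by relations defined over a Noetherian
ring `R`, over which the ring is free, is finitely generated. -/
theorem Module.annihilator_quotient_span_fg {R A ι : Type*} [CommRing R] [CommRing A]
    [Algebra R A] [IsNoetherianRing R] [Module.Free R A] [Finite ι] (V : Set (ι → R)) :
    (Module.annihilator A ((ι → A) ⧸
      Submodule.span A ((fun v i => algebraMap R A (v i)) '' V))).FG := by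
  classical
  set K := Submodule.span A ((fun v i => algebraMap R A (v i)) '' V)
  let b := Module.Free.chooseBasis R A
  have hmem : ∀ a : A, a ∈ Module.annihilator A ((ι → A) ⧸ K) ↔
      ∀ i, Pi.single i a ∈ K := by
    intro a
    rw [Submodule.annihilator_quotient, Submodule.mem_colon]
    constructor
    · intro h i
      simpa [← Pi.single_smul] using h (Pi.single i 1) trivial
    · intro h x _
      have := Fintype.ofFinite ι
      rw [← Finset.univ_sum_single x, Finset.smul_sum]
      refine sum_mem fun i _ => ?_
      convert! K.smul_mem (x i) (h i) using 1
      rw [← Pi.single_smul, ← Pi.single_smul, smul_eq_mul, smul_eq_mul, mul_comm]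
  have hcoord : ∀ a ∈ Module.annihilator A ((ι → A) ⧸ K), ∀ j,
      algebraMap R A (b.repr a j) ∈ Module.annihilator A ((ι → A) ⧸ K) := by
    intro a ha j
    rw [hmem] at ha ⊢
    intro i
    convert! Submodule.repr_mem_span_image b V j (ha i) using 1
    ext l
    obtain rfl | hl := eq_or_ne l i
    · simp
    · simp [hl]
  have heq : Module.annihilator A ((ι → A) ⧸ K) =
      ((Module.annihilator A ((ι → A) ⧸ K)).comap (algebraMap R A)).map (algebraMap R A) := by
    refine le_antisymm (fun a ha => ?_) Ideal.map_comap_le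
    rw [← b.linearCombination_repr a, Finsupp.linearCombination_apply]
    refine sum_mem fun j _ => ?_
    simp only [Algebra.smul_def]
    exact Ideal.mul_mem_right _ _ (Ideal.mem_map_of_mem _ (hcoord a ha j))
  rw [heq]
  exact Ideal.FG.map (IsNoetherian.noetherian _) _

namespace MvPolynomial

/-- The annihilator of a finitely presented module over a polynomial ring is finitely generated. -/
theorem annihilator_fg {σ k N : Type*} [CommRing k] [IsNoetherianRing k] [AddCommGroup N]
    [Module (MvPolynomial σ k) N] [Module.FinitePresentation (MvPolynomial σ k) N] :
    (Module.annihilator (MvPolynomial σ k) N).FG := by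
  classical
  obtain ⟨n, K, e, T, hT⟩ := Module.FinitePresentation.exists_fin (MvPolynomial σ k) N
  let s : Finset σ := T.biUnion fun v => Finset.univ.biUnion fun i => (v i).vars
  have := isNoetherianRing_supported (k := k) s.finite_toSet
  have := free_supported (k := k) (s : Set σ)
  let V : Set (Fin n → supported k (s : Set σ)) :=
    {v | (fun i => algebraMap _ (MvPolynomial σ k) (v i)) ∈ T}
  have hV : (fun (v : Fin n → supported k (s : Set σ)) i =>
      algebraMap _ (MvPolynomial σ k) (v i)) '' V = T := by
    refine Set.Subset.antisymm (by rintro _ ⟨v, hv, rfl⟩; exact hv) fun v hv => ?_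
    have hvs : ∀ i, v i ∈ supported k (s : Set σ) := by
      intro i
      rw [mem_supported]
      intro x hx
      simp only [s, Finset.coe_biUnion, Set.mem_iUnion]
      exact ⟨v, hv, i, by simp, hx⟩
    exact ⟨fun i => ⟨v i, hvs i⟩, hv, rfl⟩
  rw [e.annihilator_eq, ← hT, ← hV]
  exact Module.annihilator_quotient_span_fg V

/-- In a polynomial ring over a Noetherian ring, minimal primes of finitely generated ideals have
finite height. -/
theorem height_ne_top_of_mem_minimalPrimes {σ k : Type*} [CommRing k] [IsNoetherianRing k]
    {I p : Ideal (MvPolynomial σ k)} (hI : I.FG) (hp : p ∈ I.minimalPrimes)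
    (hprime : p.IsPrime) :
    Order.height (⟨p, hprime⟩ : PrimeSpectrum (MvPolynomial σ k)) ≠ ⊤ := by
  classical
  obtain ⟨T, rfl⟩ := hI
  intro htop
  obtain ⟨l, hlast, hlen⟩ := Order.height_eq_top_iff.mp htop (T.card + 1)
  have hsep : ∀ i : Fin l.length, ∃ f, f ∈ (l i.succ).asIdeal ∧ f ∉ (l i.castSucc).asIdeal :=
    fun i => SetLike.exists_of_lt (l.step i)
  choose f hf hf' using hsep
  let s : Finset σ := T.biUnion vars ∪ Finset.univ.biUnion fun i => (f i).vars
  have := isNoetherianRing_supported (k := k) s.finite_toSet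
  have := free_supported (k := k) (s : Set σ)
  have hTs : ∀ t ∈ T, t ∈ supported k (s : Set σ) := by
    intro t ht
    rw [mem_supported, Finset.coe_subset]
    exact (Finset.subset_biUnion_of_mem vars ht).trans Finset.subset_union_left
  have hfs : ∀ i, f i ∈ supported k (s : Set σ) := by
    intro i
    rw [mem_supported, Finset.coe_subset]
    exact (Finset.subset_biUnion_of_mem (fun i => (f i).vars) (Finset.mem_univ i)).trans
      Finset.subset_union_right
  let φ := algebraMap (supported k (s : Set σ)) (MvPolynomial σ k)
  let L : LTSeries (PrimeSpectrum (supported k (s : Set σ))) :=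
    { length := l.length
      toFun := fun i => PrimeSpectrum.comap φ (l i)
      step := fun i => by
        refine lt_of_le_not_ge (Ideal.comap_mono (l.step i).le) fun h => ?_
        exact hf' i (h (show (⟨f i, hfs i⟩ : supported k (s : Set σ)) ∈ _ from hf i)) }
  let T' : Finset (supported k (s : Set σ)) := T.attach.image fun t : T => ⟨t, hTs t t.2⟩
  have hmin : p.comap φ ∈ (Ideal.span (T' : Set (supported k (s : Set σ)))).minimalPrimes := by
    refine ⟨⟨inferInstance, ?_⟩, ?_⟩
    · rw [Ideal.span_le]
      intro t ht
      obtain ⟨u, -, rfl⟩ := Finset.mem_image.mp ht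
      exact hp.1.2 (Ideal.subset_span u.2)
    · rintro q ⟨hq, hTq⟩ hqp
      have : p.LiesOver (p.comap φ) := ⟨rfl⟩
      obtain ⟨P, hPp, hP, hPq⟩ := Ideal.exists_ideal_le_liesOver_of_le p hqp
      have hTP : Ideal.span (T : Set (MvPolynomial σ k)) ≤ P := by
        rw [Ideal.span_le]
        intro t ht
        have : (⟨t, hTs t ht⟩ : supported k (s : Set σ)) ∈ q :=
          hTq (Ideal.subset_span (Finset.mem_image.mpr ⟨⟨t, ht⟩, by simp, rfl⟩))
        rw [hPq.over] at this
        exact this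
      rw [hPq.over]
      exact Ideal.comap_mono (hp.2 ⟨hP, hTP⟩ hPp)
  have hle : (L.length : ℕ∞) ≤ T.card :=
    calc (L.length : ℕ∞) ≤ Order.height L.last := Order.length_le_height_last
      _ = Order.height (PrimeSpectrum.comap φ ⟨p, hprime⟩) := by
        rw [← hlast]; rfl
      _ = (p.comap φ).height := (PrimeSpectrum.height_eq_orderHeight _).symm
      _ ≤ T'.card := Ideal.height_le_card_of_mem_minimalPrimes_span_finset hmin
      _ ≤ T.card := by
        exact_mod_cast Finset.card_image_le.trans_eq T.card_attach
  have : l.length ≤ T.card := by exact_mod_cast hle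
  omega

end MvPolynomial

/-- Let `A = ℂ[X₁, X₂, …] = MvPolynomial ℕ ℂ`. For any
nonzero finitely presented `A`-module `N` there is a prime ideal `𝔭` of `A`
of finite height such that the localization `N_𝔭` is nonzero. -/
theorem exists_finite_height_prime_with_nonzero_localization
    (N : Type) [AddCommGroup N] [Module (MvPolynomial ℕ ℂ) N]
    [Module.FinitePresentation (MvPolynomial ℕ ℂ) N] (hN : Nontrivial N) :
    ∃ (𝔭 : Ideal (MvPolynomial ℕ ℂ)) (hp : 𝔭.IsPrime),
      Order.height (⟨𝔭, hp⟩ : PrimeSpectrum (MvPolynomial ℕ ℂ)) ≠ ⊤ ∧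
      Nontrivial (LocalizedModule 𝔭.primeCompl N) := by
  have hne : Module.annihilator (MvPolynomial ℕ ℂ) N ≠ ⊤ := by
    rw [Ne, Module.annihilator_eq_top_iff]
    exact not_subsingleton N
  obtain ⟨p, hp⟩ := Ideal.nonempty_minimalPrimes hne
  refine ⟨p, hp.1.1,
    MvPolynomial.height_ne_top_of_mem_minimalPrimes MvPolynomial.annihilator_fg hp hp.1.1, ?_⟩
  exact Module.mem_support_iff.mp
    ((Module.mem_support_iff_of_finite (p := ⟨p, hp.1.1⟩)).mpr hp.1.2)
end

section
/- Let A = ℂ[X₁, X₂, X₃, …] be the polynomial algebra over ℂ in countably infinitely many variables. Every bounded cochain complex of A-modules all of whose cohomology modules are finitely presented is quasi-isomorphic to a bounded complex of finite rank free A-modules; that is, for such a complex C there exist a bounded cochain complex F with all terms free A-modules of finite rank and a quasi-isomorphism (a chain map inducing isomorphisms on all cohomology) F → C. -/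
open CategoryTheory Limits

universe v

/-- A cochain complex of modules is bounded with finite free terms. -/
structure CochainComplex.IsBoundedFiniteFree {R : Type} [CommRing R]
    (F : CochainComplex (ModuleCat.{v} R) ℤ) : Prop where
  free_finite : ∀ i : ℤ, Module.Free R (F.X i) ∧ Module.Finite R (F.X i)
  bounded : ∃ a b : ℤ, ∀ i : ℤ, (i < a ∨ b < i) → IsZero (F.X i)

namespace CochainComplex.IsBoundedFiniteFree

variable {R : Type} [CommRing R] {F G : CochainComplex (ModuleCat.{v} R) ℤ}

lemma single (n : ℤ) (M : ModuleCat.{v} R) [Module.Free R M] [Module.Finite R M] :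
    CochainComplex.IsBoundedFiniteFree
      ((HomologicalComplex.single _ (ComplexShape.up ℤ) n).obj M) where
  free_finite i := by
    by_cases h : i = n
    · subst h
      let e := (HomologicalComplex.singleObjXSelf (ComplexShape.up ℤ) i M).symm.toLinearEquiv
      exact ⟨.of_equiv e, .equiv e⟩
    · have := ModuleCat.subsingleton_of_isZero
        (HomologicalComplex.isZero_single_obj_X (ComplexShape.up ℤ) n M i h)
      exact ⟨inferInstance, inferInstance⟩
  bounded := ⟨n, n, fun i hi =>
    HomologicalComplex.isZero_single_obj_X (ComplexShape.up ℤ) n M i (by lia)⟩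

lemma shift (hF : F.IsBoundedFiniteFree) (n : ℤ) : (F⟦n⟧).IsBoundedFiniteFree where
  free_finite i := hF.free_finite (i + n)
  bounded := by
    obtain ⟨a, b, h⟩ := hF.bounded
    exact ⟨a - n, b - n, fun i hi => h (i + n) (by lia)⟩

lemma mappingCone (hF : F.IsBoundedFiniteFree) (hG : G.IsBoundedFiniteFree) (φ : F ⟶ G) :
    (CochainComplex.mappingCone φ).IsBoundedFiniteFree where
  free_finite i := by
    obtain ⟨_, _⟩ := hF.free_finite (i + 1)
    obtain ⟨_, _⟩ := hG.free_finite i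
    let e := ((HomologicalComplex.homotopyCofiber.XIsoBiprod φ i (i + 1) rfl ≪≫
      ModuleCat.biprodIsoProd _ _).symm).toLinearEquiv
    have : Module.Free R (F.X (i + 1) × G.X i) := inferInstance
    have : Module.Finite R (F.X (i + 1) × G.X i) := inferInstance
    exact ⟨.of_equiv e, .equiv e⟩
  bounded := by
    obtain ⟨a, b, h⟩ := hF.bounded
    obtain ⟨a', b', h'⟩ := hG.bounded
    refine ⟨min (a - 1) a', max b b', fun i hi => ?_⟩
    exact ((biprod_isZero_iff _ _).2 ⟨h _ (by lia), h' _ (by lia)⟩).of_iso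
      (HomologicalComplex.homotopyCofiber.XIsoBiprod φ i (i + 1) rfl)

lemma isKProjective (hF : F.IsBoundedFiniteFree) : F.IsKProjective := by
  obtain ⟨a, b, h⟩ := hF.bounded
  have : F.IsStrictlyLE b := (F.isStrictlyLE_iff b).2 fun i hi => h i (.inr hi)
  have (n : ℤ) : Projective (F.X n) := by
    have := (hF.free_finite n).1
    exact (IsProjective.iff_projective (F.X n)).1 inferInstance
  exact CochainComplex.isKProjective_of_projective F b

end CochainComplex.IsBoundedFiniteFree

lemma CochainComplex.IsKProjective.Q_map_surjective {C : Type*} [Category* C] [Abelian C]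
    [HasDerivedCategory C] (K L : CochainComplex C ℤ) [K.IsKProjective] :
    Function.Surjective (DerivedCategory.Q.map : (K ⟶ L) → _) := by
  intro f
  let e := DerivedCategory.quotientCompQhIso C
  obtain ⟨g, hg⟩ := (Qh_map_bijective K ((HomotopyCategory.quotient _ _).obj L)).surjective
    (e.hom.app K ≫ f ≫ e.inv.app L)
  obtain ⟨h, rfl⟩ := (HomotopyCategory.quotient _ _).map_surjective g
  refine ⟨h, ?_⟩
  rw [← cancel_epi (e.hom.app K), ← DerivedCategory.quotientCompQhIso_hom_naturality, hg]
  simp [e]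

namespace DerivedCategory

variable (R : Type) [CommRing R] [HasDerivedCategory (ModuleCat.{v} R)]

/-- The objects of the derived category represented by bounded complexes of finite free modules. -/
def boundedFiniteFree : ObjectProperty (DerivedCategory (ModuleCat.{v} R)) := fun X =>
  ∃ F : CochainComplex (ModuleCat.{v} R) ℤ, F.IsBoundedFiniteFree ∧ Nonempty (Q.obj F ≅ X)

instance : (boundedFiniteFree R).IsClosedUnderIsomorphisms where
  of_iso := by
    rintro X Y e ⟨F, hF, ⟨e'⟩⟩
    exact ⟨F, hF, ⟨e' ≪≫ e⟩⟩

instance : (boundedFiniteFree R).ContainsZero where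
  exists_zero := ⟨(singleFunctor _ 0).obj (ModuleCat.of R PUnit.{v + 1}),
    (singleFunctor _ 0).map_isZero (ModuleCat.isZero_of_subsingleton _),
    (HomologicalComplex.single _ _ 0).obj (ModuleCat.of R PUnit.{v + 1}), .single 0 _, ⟨Iso.refl _⟩⟩

instance : (boundedFiniteFree R).IsStableUnderShift ℤ where
  isStableUnderShiftBy n := ⟨by
    rintro X ⟨F, hF, ⟨e⟩⟩
    exact ⟨F⟦n⟧, hF.shift n, ⟨(Q.commShiftIso n).app F ≪≫ (shiftFunctor _ n).mapIso e⟩⟩⟩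

instance : (boundedFiniteFree R).IsTriangulatedClosed₃ := .mk' (by
  rintro T hT ⟨F, hF, ⟨e⟩⟩ ⟨G, hG, ⟨e'⟩⟩
  have := hF.isKProjective
  obtain ⟨φ, hφ⟩ := CochainComplex.IsKProjective.Q_map_surjective F G (e.hom ≫ T.mor₁ ≫ e'.inv)
  exact ⟨_, hF.mappingCone hG φ, ⟨Pretriangulated.Triangle.π₃.mapIso
    (Pretriangulated.isoTriangleOfIso₁₂ _ _ (mappingCone_triangle_distinguished φ) hT e e'
      (by change Q.map φ ≫ e'.hom = e.hom ≫ T.mor₁; simp [hφ]))⟩⟩)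

instance : (boundedFiniteFree R).IsTriangulated where
  toIsTriangulatedClosed₂ := .of_isTriangulatedClosed₃

variable {R}

lemma boundedFiniteFree_singleFunctor_of_zero {M : ModuleCat.{v} R}
    (h : boundedFiniteFree R ((singleFunctor _ 0).obj M)) (n : ℤ) :
    boundedFiniteFree R ((singleFunctor _ n).obj M) :=
  (boundedFiniteFree R).prop_of_iso
    (((singleFunctors _).shiftIso (-n) n 0 (by lia)).app M)
    ((boundedFiniteFree R).le_shift (-n) _ h)

lemma boundedFiniteFree_of_homology (hR : ∀ M : ModuleCat.{v} R,
      Module.FinitePresentation R M → boundedFiniteFree R ((singleFunctor _ 0).obj M))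
    (n : ℕ) : ∀ (b : ℤ) (K : CochainComplex (ModuleCat.{v} R) ℤ), K.IsLE b → K.IsGE (b + 1 - n) →
      (∀ i, Module.FinitePresentation R (K.homology i)) → boundedFiniteFree R (Q.obj K) := by
  induction n with
  | zero =>
    intro b K hb ha _
    have : K.IsGE (b + 1) := by simpa using ha
    exact (boundedFiniteFree R).prop_of_isZero (TStructure.t.isZero (Q.obj K) b (b + 1) (by lia))
  | succ n ih =>
    intro b K hb ha hK
    have hS := K.shortComplexTruncLE_shortExact (b - 1)
    have eLE (i : ℤ) (hi : i ≤ b - 1) : (K.truncLE (b - 1)).homology i ≅ K.homology i :=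
      have := K.quasiIsoAt_ιTruncLE (b - 1) i hi
      isoOfQuasiIsoAt (K.ιTruncLE (b - 1)) i
    have hLE : boundedFiniteFree R (Q.obj (K.truncLE (b - 1))) := by
      refine ih (b - 1) _ inferInstance ?_ fun i => ?_
      · rw [CochainComplex.isGE_iff]
        intro i hi
        rw [HomologicalComplex.exactAt_iff_isZero_homology]
        by_cases hib : i ≤ b - 1
        · exact (K.isZero_of_isGE (b + 1 - (n + 1 : ℕ)) i (by lia)).of_iso (eLE i hib)
        · exact (K.truncLE (b - 1)).isZero_of_isLE (b - 1) i
      · by_cases hib : i ≤ b - 1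
        · have := hK i
          exact .of_equiv (eLE i hib).symm.toLinearEquiv
        · have := ModuleCat.subsingleton_of_isZero
            ((K.truncLE (b - 1)).isZero_of_isLE (b - 1) i)
          exact .of_equiv (0 : PUnit.{v + 1} ≃ₗ[R] _)
    have hGE : boundedFiniteFree R (Q.obj (K.truncGE b)) := by
      have : (K.truncGE b).IsLE b := by
        rw [CochainComplex.isLE_iff]
        intro i hi
        rw [HomologicalComplex.exactAt_iff_isZero_homology]
        have := K.quasiIsoAt_πTruncGE b i hi.le
        exact (K.isZero_of_isLE b i).of_iso (isoOfQuasiIsoAt (K.πTruncGE b) i).symm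
      obtain ⟨Y, ⟨e⟩⟩ := exists_iso_singleFunctor_obj_of_isGE_of_isLE (Q.obj (K.truncGE b)) b
      refine (boundedFiniteFree R).prop_of_iso e.symm
        (boundedFiniteFree_singleFunctor_of_zero (hR Y ?_) b)
      have e' : K.homology b ≅ Y := isoOfQuasiIsoAt (K.πTruncGE b) b ≪≫
        ((homologyFunctorFactors _ b).app _).symm ≪≫ (homologyFunctor _ b).mapIso e ≪≫
        (homologyFunctorFactors _ b).app _ ≪≫
        HomologicalComplex.singleObjHomologySelfIso (ComplexShape.up ℤ) b Y
      have := hK b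
      exact .of_equiv e'.toLinearEquiv
    refine (boundedFiniteFree R).ext_of_isTriangulatedClosed₂ _ (triangleOfSES_distinguished hS)
      hLE ((boundedFiniteFree R).prop_of_iso ?_ hGE)
    exact (asIso (Q.map (K.shortComplexTruncLEX₃ToTruncGE (b - 1) b (by lia)))).symm

lemma exists_quasiIso_of_boundedFiniteFree {C : CochainComplex (ModuleCat.{v} R) ℤ}
    (h : boundedFiniteFree R (Q.obj C)) :
    ∃ (F : CochainComplex (ModuleCat.{v} R) ℤ) (f : F ⟶ C),
      F.IsBoundedFiniteFree ∧ QuasiIso f := by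
  obtain ⟨F, hF, ⟨e⟩⟩ := h
  have := hF.isKProjective
  obtain ⟨f, hf⟩ := CochainComplex.IsKProjective.Q_map_surjective F C e.hom
  refine ⟨F, f, hF, ?_⟩
  rw [← isIso_Q_map_iff_quasiIso, hf]
  infer_instance

end DerivedCategory

/-- The smallest class of modules containing the finite free modules and closed under cokernels
of injective maps. -/
inductive Module.FiniteFreeGenerated (R : Type) [CommRing R] :
    ∀ (M : Type v) [AddCommGroup M] [Module R M], Prop
  | free (M : Type v) [AddCommGroup M] [Module R M] [Module.Free R M] [Module.Finite R M] :
      FiniteFreeGenerated R M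
  | coker {L M N : Type v} [AddCommGroup L] [Module R L] [AddCommGroup M] [Module R M]
      [AddCommGroup N] [Module R N] (f : L →ₗ[R] M) (g : M →ₗ[R] N)
      (hf : Function.Injective f) (hfg : Function.Exact f g) (hg : Function.Surjective g)
      (hL : FiniteFreeGenerated R L) (hM : FiniteFreeGenerated R M) : FiniteFreeGenerated R N

namespace Module.FiniteFreeGenerated

open TensorProduct Polynomial

variable {R : Type} [CommRing R]

lemma of_equiv {M N : Type v} [AddCommGroup M] [Module R M] [AddCommGroup N] [Module R N]
    (e : M ≃ₗ[R] N) (hM : FiniteFreeGenerated R M) : FiniteFreeGenerated R N := by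
  refine .coker (0 : PUnit.{v + 1} →ₗ[R] M) e.toLinearMap (Function.injective_of_subsingleton _)
    (fun x => ?_) e.surjective (.free _) hM
  simp only [LinearEquiv.coe_coe, map_eq_zero_iff e e.injective, LinearMap.zero_apply,
    Set.mem_range, exists_const]
  exact eq_comm

lemma baseChange (S : Type) [CommRing S] [Algebra R S] [Module.Flat R S] {M : Type v}
    [AddCommGroup M] [Module R M] (hM : FiniteFreeGenerated R M) :
    FiniteFreeGenerated S (S ⊗[R] M) := by
  induction hM with
  | free M => exact .free _
  | coker f g hf hfg hg _ _ ihL ihM =>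
    exact .coker (f.baseChange S) (g.baseChange S)
      (Module.Flat.lTensor_preserves_injective_linearMap f hf)
      (lTensor_exact S hfg hg) (LinearMap.lTensor_surjective S hg) ihL ihM

/-- Transfer along a ring isomorphism. -/
lemma of_ringEquiv {S : Type} [CommRing S] (e : R ≃+* S)
    (h : ∀ (M : Type v) [AddCommGroup M] [Module R M] [Module.Finite R M],
      FiniteFreeGenerated R M)
    (M : Type v) [AddCommGroup M] [Module S M] [Module.Finite S M] : FiniteFreeGenerated S M := by
  algebraize [e.toRingHom]
  let : Module R M := Module.compHom M e.toRingHom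
  have : IsScalarTower R S M := ⟨fun r s m => by
    rw [Algebra.smul_def, mul_smul]; rfl⟩
  have hsurj : Function.Surjective (algebraMap R S) := e.surjective
  have : Module.Finite R S := .of_surjective (Algebra.linearMap R S) hsurj
  have : Module.Finite R M := .trans S M
  have : Module.Flat R S :=
    .of_linearEquiv (LinearEquiv.ofBijective (Algebra.linearMap R S) e.bijective).symm
  refine .of_equiv ?_ ((h M).baseChange S)
  refine LinearEquiv.ofBijective (LinearMap.liftBaseChange S (LinearMap.id : M →ₗ[R] M)) ⟨?_, ?_⟩
  · intro x y hxy
    have key (z : S ⊗[R] M) : z = 1 ⊗ₜ LinearMap.liftBaseChange S (LinearMap.id : M →ₗ[R] M) z := by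
      induction z with
      | zero => simp
      | add z w hz hw => rw [map_add, tmul_add, ← hz, ← hw]
      | tmul s m =>
        obtain ⟨r, rfl⟩ := hsurj s
        simp [Algebra.algebraMap_eq_smul_one, smul_tmul]
    rw [key x, key y, hxy]
  · exact fun m => ⟨1 ⊗ₜ m, by simp⟩

section Polynomial

variable {M : Type v} [AddCommGroup M] [Module R M] [Module R[X] M] [IsScalarTower R R[X] M]

/-- Multiplication by `X`, on the elements of a submodule which it maps to that submodule. -/
noncomputable def mulX (N : Submodule R M) :
    ↥(N ⊓ N.comap (Algebra.lsmul R R M (X : R[X]))) →ₗ[R] N :=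
  ((Algebra.lsmul R R M (X : R[X])).domRestrict _).codRestrict N fun n => n.2.2

@[simp]
lemma coe_mulX (N : Submodule R M) (n : ↥(N ⊓ N.comap (Algebra.lsmul R R M (X : R[X])))) :
    (mulX N n : M) = (X : R[X]) • (n : M) := rfl

/-- The relations `X ⊗ n - 1 ⊗ X n` in `R[X] ⊗ N`. -/
noncomputable def relation (N : Submodule R M) :
    R[X] ⊗[R] ↥(N ⊓ N.comap (Algebra.lsmul R R M (X : R[X]))) →ₗ[R[X]] R[X] ⊗[R] N :=
  LinearMap.liftBaseChange R[X]
    (TensorProduct.mk R R[X] N X ∘ₗ Submodule.inclusion inf_le_left -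
      TensorProduct.mk R R[X] N 1 ∘ₗ mulX N)

/-- The multiplication map `R[X] ⊗ N → M`. -/
noncomputable def augmentation (N : Submodule R M) : R[X] ⊗[R] N →ₗ[R[X]] M :=
  LinearMap.liftBaseChange R[X] N.subtype

lemma augmentation_relation (N : Submodule R M)
    (z : R[X] ⊗[R] ↥(N ⊓ N.comap (Algebra.lsmul R R M (X : R[X])))) :
    augmentation N (relation N z) = 0 := by
  induction z with
  | zero => simp
  | add z w hz hw => simp [hz, hw]
  | tmul p n => simp [augmentation, relation]

/-- The `j`-th coefficient of an element of `R[X] ⊗ N`. -/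
noncomputable def coeffTensor (N : Type v) [AddCommGroup N] [Module R N] (j : ℕ) :
    R[X] ⊗[R] N →ₗ[R] N :=
  TensorProduct.lid R N ∘ₗ (Polynomial.lcoeff R j).rTensor N

lemma coeffTensor_tmul {N : Type v} [AddCommGroup N] [Module R N] (j : ℕ) (p : R[X]) (n : N) :
    coeffTensor N j (p ⊗ₜ[R] n) = p.coeff j • n := by
  simp [coeffTensor]

lemma exists_coeffTensor_eq_zero {N : Type v} [AddCommGroup N] [Module R N] (z : R[X] ⊗[R] N) :
    ∃ d, ∀ j, d ≤ j → coeffTensor N j z = 0 := by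
  induction z with
  | zero => exact ⟨0, by simp⟩
  | add z w hz hw =>
    obtain ⟨a, ha⟩ := hz
    obtain ⟨b, hb⟩ := hw
    exact ⟨max a b, fun j hj => by rw [map_add, ha j (by lia), hb j (by lia), add_zero]⟩
  | tmul p n =>
    exact ⟨p.natDegree + 1, fun j hj => by
      rw [coeffTensor_tmul, coeff_eq_zero_of_natDegree_lt (by lia), zero_smul]⟩

lemma eq_zero_of_coeffTensor {N : Type v} [AddCommGroup N] [Module R N] (z : R[X] ⊗[R] N)
    (hz : ∀ j, coeffTensor N j z = 0) : z = 0 := by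
  let e := PolynomialModule.polynomialTensorProductLEquivPolynomialModule R N
  have key (w : R[X] ⊗[R] N) (j : ℕ) : (e w).coeff j = coeffTensor N j w := by
    induction w with
    | zero => simp
    | add z w hz hw => simp [hz, hw]
    | tmul p n =>
      rw [coeffTensor_tmul]
      have h : e (p ⊗ₜ n) = p • PolynomialModule.single R 0 n := by
        simp [e, PolynomialModule.polynomialTensorProductLEquivPolynomialModule]
        rfl
      simp [h, PolynomialModule.smul_single_apply]
  apply e.injective
  rw [map_zero, ← PolynomialModule.coeff_eq_zero]
  ext j
  simp [key, hz]

lemma coeffTensor_relation (N : Submodule R M) (j : ℕ)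
    (z : R[X] ⊗[R] ↥(N ⊓ N.comap (Algebra.lsmul R R M (X : R[X])))) :
    (coeffTensor N (j + 1) (relation N z) : M) =
      (coeffTensor ↥(N ⊓ N.comap (Algebra.lsmul R R M (X : R[X]))) j z : M) -
        (X : R[X]) •
          (coeffTensor ↥(N ⊓ N.comap (Algebra.lsmul R R M (X : R[X]))) (j + 1) z : M) := by
  induction z with
  | zero => simp
  | add z w hz hw => simp only [map_add, Submodule.coe_add, hz, hw, smul_add]; abel
  | tmul p n =>
    simp only [relation, LinearMap.liftBaseChange_tmul, LinearMap.sub_apply, LinearMap.comp_apply,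
      TensorProduct.mk_apply, smul_sub, smul_tmul', map_sub, coeffTensor_tmul]
    simp [coeff_mul_X, smul_comm (X : R[X]) (p.coeff (j + 1)) (n : M)]

lemma relation_injective (N : Submodule R M) : Function.Injective (relation N) := by
  rw [injective_iff_map_eq_zero]
  intro z hz
  obtain ⟨d, hd⟩ := exists_coeffTensor_eq_zero z
  have key (k : ℕ) : ∀ j, d ≤ j + k → coeffTensor _ j z = 0 := by
    induction k with
    | zero => simpa using hd
    | succ k ih =>
      intro j hj
      have h := coeffTensor_relation N j z
      rw [hz, ih (j + 1) (by lia)] at h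
      apply Subtype.ext
      simpa using h.symm
  exact eq_zero_of_coeffTensor z fun j => key d j (by lia)

lemma exists_coe_eq_smul (N : Submodule R M) {T : Type v} [AddCommGroup T] [Module R T]
    [Module R[X] T] [IsScalarTower R R[X] T] (τ : N →ₗ[R] T)
    (hτ : ∀ n n' : N, (n' : M) = (X : R[X]) • (n : M) → τ n' = (X : R[X]) • τ n)
    {d : ℕ} {v : N} (hv : ∀ l ≤ d, (X ^ l : R[X]) • (v : M) ∈ N) {p : R[X]}
    (hp : p.natDegree ≤ d) : ∃ n : N, (n : M) = p • (v : M) ∧ τ n = p • τ v := by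
  have hpow (l : ℕ) (hl : l ≤ d) : τ ⟨_, hv l hl⟩ = (X ^ l : R[X]) • τ v := by
    induction l with
    | zero => simp
    | succ l ih =>
      rw [hτ ⟨_, hv l (by lia)⟩ _ (by simp [pow_succ', mul_smul]), ih (by lia), pow_succ',
        mul_smul]
  have hp' : p ∈ degreeLE R d := mem_degreeLE.2 (natDegree_le_iff_degree_le.1 hp)
  clear hp
  classical
  rw [degreeLE_eq_span_X_pow] at hp'
  induction hp' using Submodule.span_induction with
  | mem x hx =>
    obtain ⟨l, hl, rfl⟩ : ∃ l ≤ d, (X ^ l : R[X]) = x := by simpa [Nat.lt_succ_iff] using hx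
    exact ⟨⟨_, hv l hl⟩, rfl, hpow l hl⟩
  | zero => exact ⟨0, by simp, by simp⟩
  | add x y _ _ hx hy =>
    obtain ⟨n, hn, hn'⟩ := hx
    obtain ⟨m, hm, hm'⟩ := hy
    exact ⟨n + m, by simp [hn, hm, add_smul], by simp [hn', hm', add_smul]⟩
  | smul a x _ hx =>
    obtain ⟨n, hn, hn'⟩ := hx
    exact ⟨a • n, by simp [hn], by simp [hn']⟩

/-- If `M` is generated over `R[X]` by `v` with relations of degree at most `d`, and `N` is
generated over `R` by the `X ^ l • v k` with `l ≤ d`, then `M` is the quotient of `R[X] ⊗ N` by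
the relations `X ⊗ n - 1 ⊗ X n`. -/
lemma exact_relation_augmentation {ι : Type*} [Fintype ι] (v : ι → M) (G : Set (ι → R[X]))
    (hG : Submodule.span R[X] G = LinearMap.ker (Fintype.linearCombination R[X] v)) (d : ℕ)
    (hd : ∀ g ∈ G, ∀ k, (g k).natDegree ≤ d) (N : Submodule R M)
    (hN : N = Submodule.span R
      (Set.range fun x : ι × Fin (d + 1) => (X ^ (x.2 : ℕ) : R[X]) • v x.1)) :
    Function.Exact (relation N) (augmentation N) := by
  have hvN (k : ι) (l : ℕ) (hl : l ≤ d) : (X ^ l : R[X]) • v k ∈ N :=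
    hN ▸ Submodule.subset_span ⟨(k, ⟨l, by lia⟩), rfl⟩
  let w (k : ι) : N := ⟨v k, by simpa using hvN k 0 (by lia)⟩
  let π := (LinearMap.range (relation N)).mkQ
  let τ : N →ₗ[R] (R[X] ⊗[R] N) ⧸ LinearMap.range (relation N) :=
    (π.restrictScalars R) ∘ₗ TensorProduct.mk R R[X] N 1
  have hτ (n n' : N) (h : (n' : M) = (X : R[X]) • (n : M)) : τ n' = (X : R[X]) • τ n := by
    have hn : (n : M) ∈ N ⊓ N.comap (Algebra.lsmul R R M (X : R[X])) := ⟨n.2, by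
      simp [← h]⟩
    have : relation N (1 ⊗ₜ[R] ⟨n, hn⟩) = (X : R[X]) • (1 ⊗ₜ[R] n) - 1 ⊗ₜ[R] n' := by
      have : mulX N ⟨n, hn⟩ = n' := Subtype.ext h.symm
      simp [relation, this, smul_tmul']
      rfl
    rw [eq_comm, ← sub_eq_zero]
    change (X : R[X]) • π (1 ⊗ₜ n) - π (1 ⊗ₜ n') = 0
    rw [← map_smul, ← map_sub, ← this]
    exact (Submodule.Quotient.mk_eq_zero _).2 ⟨_, rfl⟩
  have hw (k : ι) {p : R[X]} (hp : p.natDegree ≤ d) :=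
    exists_coe_eq_smul N τ hτ (v := w k) (hvN k) hp
  let s := Fintype.linearCombination R[X] fun k => τ (w k)
  have hsG : Submodule.span R[X] G ≤ LinearMap.ker s := by
    rw [Submodule.span_le]
    intro g hg
    choose n hn hn' using fun k => hw k (hd g hg k)
    have h0 : ∑ k, n k = 0 := by
      apply Subtype.ext
      have : g ∈ LinearMap.ker (Fintype.linearCombination R[X] v) := hG ▸ Submodule.subset_span hg
      simpa [Fintype.linearCombination_apply, hn, w] using this
    have : s g = τ (∑ k, n k) := by simp [s, Fintype.linearCombination_apply, hn']
    simp [this, h0]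
  have hs (t : R[X] ⊗[R] N) : ∃ y, s y = π t := by
    suffices h : ∀ n : N, τ n ∈ LinearMap.range s by
      induction t with
      | zero => exact ⟨0, by simp⟩
      | add z w hz hw =>
        rw [map_add]
        exact (LinearMap.range s).add_mem hz hw
      | tmul p n =>
        have : p ⊗ₜ[R] n = p • (1 ⊗ₜ n) := by simp [smul_tmul']
        rw [this, map_smul]
        exact (LinearMap.range s).smul_mem p (h n)
    have hle : N ≤ ((LinearMap.range s).restrictScalars R |>.comap τ).map N.subtype := by
      conv_lhs => rw [hN]
      rw [Submodule.span_le]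
      rintro _ ⟨⟨k, l⟩, rfl⟩
      obtain ⟨n, hn, hn'⟩ := hw k (p := X ^ (l : ℕ)) ((natDegree_X_pow_le _).trans (by lia))
      refine ⟨n, ?_, hn⟩
      change τ n ∈ LinearMap.range s
      classical
      exact ⟨Pi.single k (X ^ (l : ℕ)), by simp [s, hn']⟩
    intro n
    obtain ⟨m, hm, hmn⟩ := hle n.2
    obtain rfl : m = n := Subtype.ext hmn
    exact hm
  refine LinearMap.exact_iff.2 (le_antisymm (fun t ht => ?_) ?_)
  · obtain ⟨y, hy⟩ := hs t
    let a := (LinearMap.range (relation N)).liftQ (augmentation N) (by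
      rintro _ ⟨z, rfl⟩
      exact augmentation_relation N z)
    have has : a ∘ₗ s = Fintype.linearCombination R[X] v := by
      classical
      ext k
      simp [a, s, τ, π, augmentation, w]
    have hy0 : y ∈ LinearMap.ker (Fintype.linearCombination R[X] v) := by
      rw [← has, LinearMap.mem_ker, LinearMap.comp_apply, hy]
      exact ht
    have : π t = 0 := by rw [← hy]; exact hsG (hG ▸ hy0)
    exact (Submodule.Quotient.mk_eq_zero _).1 this
  · rintro _ ⟨z, rfl⟩
    exact augmentation_relation N z

end Polynomial

lemma polynomial [IsNoetherianRing R]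
    (h : ∀ (M : Type v) [AddCommGroup M] [Module R M] [Module.Finite R M],
      FiniteFreeGenerated R M)
    (M : Type v) [AddCommGroup M] [Module R[X] M] [Module.Finite R[X] M] :
    FiniteFreeGenerated R[X] M := by
  let : Module R M := Module.compHom M (C : R →+* R[X])
  have : IsScalarTower R R[X] M := ⟨fun r s m => by
    rw [smul_eq_C_mul, mul_smul]; rfl⟩
  obtain ⟨b, v, hv⟩ := Module.Finite.exists_fin (R := R[X]) (M := M)
  obtain ⟨G, hG⟩ := IsNoetherian.noetherian (LinearMap.ker (Fintype.linearCombination R[X] v))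
  let d := G.sup fun g => Finset.univ.sup fun k => (g k).natDegree
  have hd : ∀ g ∈ G, ∀ k, (g k).natDegree ≤ d := fun g hg k =>
    (Finset.le_sup (f := fun k => (g k).natDegree) (Finset.mem_univ k)).trans
      (Finset.le_sup (f := fun g => Finset.univ.sup fun k => (g k).natDegree) hg)
  let N := Submodule.span R
    (Set.range fun x : Fin b × Fin (d + 1) => (X ^ (x.2 : ℕ) : R[X]) • v x.1)
  have : Module.Finite R N := .span_of_finite R (Set.finite_range _)
  have : Module.Finite R ↥(N ⊓ N.comap (Algebra.lsmul R R M (X : R[X]))) :=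
    .of_injective (Submodule.inclusion inf_le_left) (Submodule.inclusion_injective _)
  refine .coker (relation N) (augmentation N) (relation_injective N)
    (exact_relation_augmentation v G hG d hd N rfl) ?_ ((h _).baseChange R[X])
    ((h _).baseChange R[X])
  rw [← LinearMap.range_eq_top, ← top_le_iff, ← hv, Submodule.span_le]
  rintro _ ⟨k, rfl⟩
  exact ⟨1 ⊗ₜ ⟨v k, Submodule.subset_span ⟨(k, 0), by simp⟩⟩, by simp [augmentation]⟩

lemma mvPolynomial_of_finite (k : Type) [Field k] (σ : Type) [Finite σ] :
    ∀ (M : Type v) [AddCommGroup M] [Module (MvPolynomial σ k) M]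
      [Module.Finite (MvPolynomial σ k) M], FiniteFreeGenerated (MvPolynomial σ k) M := by
  induction σ using Finite.induction_empty_option with
  | of_equiv e h => exact of_ringEquiv (MvPolynomial.renameEquiv k e).toRingEquiv h
  | h_empty =>
    exact of_ringEquiv (MvPolynomial.isEmptyAlgEquiv k PEmpty).symm.toRingEquiv fun M _ _ _ =>
      .free M
  | h_option h =>
    exact of_ringEquiv (MvPolynomial.optionEquivLeft k _).symm.toRingEquiv (polynomial h)

lemma of_presentation {S : Type} [CommRing S] [Algebra R S] [Module.Flat R S]
    (h : ∀ (M : Type v) [AddCommGroup M] [Module R M] [Module.Finite R M],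
      FiniteFreeGenerated R M)
    {M : Type v} [AddCommGroup M] [Module S M] {m n : ℕ} (f : (Fin n → S) →ₗ[S] M)
    (g : (Fin m → S) →ₗ[S] (Fin n → S)) (hf : Function.Surjective f) (hgf : Function.Exact g f)
    (a : Fin m → Fin n → R) (ha : ∀ j i, algebraMap R S (a j i) = g (Pi.single j 1) i) :
    FiniteFreeGenerated S M := by
  let g₀ := Fintype.linearCombination R a
  let q := (LinearMap.range g₀).mkQ
  let em := piScalarRight R S S (Fin m)
  let en := piScalarRight R S S (Fin n)
  have hcomm : en.toLinearMap ∘ₗ g₀.baseChange S = g ∘ₗ em.toLinearMap := by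
    ext j i
    simp [en, em, g₀, Algebra.smul_def]
    have : (fun l => algebraMap R S ((Pi.single j 1 : Fin m → R) l)) = Pi.single j 1 := by
      ext l
      by_cases hl : l = j <;> simp [hl]
    rw [ha, this]
  have hex : Function.Exact (g₀.baseChange S) (q.baseChange S) :=
    lTensor_exact S (LinearMap.exact_map_mkQ_range g₀) (Submodule.mkQ_surjective _)
  have hker : LinearMap.ker (q.baseChange S) = LinearMap.ker (f ∘ₗ en.toLinearMap) := by
    ext x
    rw [LinearMap.mem_ker, LinearMap.mem_ker, hex x, LinearMap.comp_apply, hgf _]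
    constructor
    · rintro ⟨y, rfl⟩
      exact ⟨em y, (LinearMap.congr_fun hcomm y).symm⟩
    · rintro ⟨y, hy⟩
      refine ⟨em.symm y, en.injective ?_⟩
      rw [← LinearEquiv.coe_coe, ← LinearMap.comp_apply, hcomm]
      simpa using hy
  exact .of_equiv (ULift.moduleEquiv.{0, 0, v}.baseChange R S _ _ ≪≫ₗ
    (LinearMap.quotKerEquivOfSurjective (q.baseChange S)
      (LinearMap.lTensor_surjective S (Submodule.mkQ_surjective _))).symm ≪≫ₗ
    Submodule.quotEquivOfEq _ _ hker ≪≫ₗ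
    LinearMap.quotKerEquivOfSurjective (f ∘ₗ en.toLinearMap) (hf.comp en.surjective))
    ((h _).baseChange S)

end Module.FiniteFreeGenerated

lemma MvPolynomial.flat_rename_subtypeVal (R : Type*) [CommRing R] {σ : Type*} (s : Set σ) :
    (rename (Subtype.val : s → σ) : MvPolynomial s R →ₐ[R] _).toRingHom.Flat := by
  classical
  let e := (sumAlgEquiv R (sᶜ : Set σ) s).symm.trans
    (renameEquiv R ((Equiv.sumComm _ _).trans (Equiv.Set.sumCompl s)))
  have h : (rename (Subtype.val : s → σ) : MvPolynomial s R →ₐ[R] _).toRingHom =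
      e.toRingEquiv.toRingHom.comp (C : _ →+* MvPolynomial (sᶜ : Set σ) (MvPolynomial s R)) := by
    apply ringHom_ext <;> intro <;> simp [e]
  rw [h]
  exact .comp (RingHom.flat_algebraMap_iff.2 inferInstance) (.of_bijective e.bijective)

lemma Module.FinitePresentation.finiteFreeGenerated_mvPolynomial (k : Type) [Field k]
    (σ : Type) (M : Type v) [AddCommGroup M] [Module (MvPolynomial σ k) M]
    [Module.FinitePresentation (MvPolynomial σ k) M] :
    Module.FiniteFreeGenerated (MvPolynomial σ k) M := by
  classical
  obtain ⟨n, m, f, g, hf, hgf⟩ := Module.FinitePresentation.exists_fin' (MvPolynomial σ k) M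
  let p (x : Fin m × Fin n) : MvPolynomial σ k := g (Pi.single x.1 1) x.2
  obtain ⟨s, hs⟩ : ∃ s : Finset σ, ∀ x, (p x).vars ⊆ s :=
    ⟨Finset.univ.biUnion fun x => (p x).vars, fun x =>
      Finset.subset_biUnion_of_mem (fun x => (p x).vars) (Finset.mem_univ x)⟩
  have h (j : Fin m) (i : Fin n) : ∃ q : MvPolynomial (s : Set σ) k,
      MvPolynomial.rename Subtype.val q = g (Pi.single j 1) i := by
    refine MvPolynomial.exists_rename_eq_of_vars_subset_range _ _ Subtype.val_injective ?_
    rw [Subtype.range_coe]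
    exact Finset.coe_subset.2 (hs (j, i))
  choose a ha using h
  let := (MvPolynomial.rename (Subtype.val : ↥(s : Set σ) → σ) :
    MvPolynomial (s : Set σ) k →ₐ[k] _).toRingHom.toAlgebra
  have : Module.Flat (MvPolynomial (s : Set σ) k) (MvPolynomial σ k) :=
    MvPolynomial.flat_rename_subtypeVal k (s : Set σ)
  exact .of_presentation (Module.FiniteFreeGenerated.mvPolynomial_of_finite k (s : Set σ)) f g hf
    hgf a ha

lemma Module.FiniteFreeGenerated.boundedFiniteFree {R : Type} [CommRing R]
    [HasDerivedCategory (ModuleCat.{v} R)] {M : Type v} [AddCommGroup M] [Module R M]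
    (hM : Module.FiniteFreeGenerated R M) :
    DerivedCategory.boundedFiniteFree R
      ((DerivedCategory.singleFunctor _ 0).obj (ModuleCat.of R M)) := by
  induction hM with
  | free M =>
    exact ⟨(HomologicalComplex.single _ _ 0).obj (ModuleCat.of R M), .single 0 _,
      ⟨Iso.refl _⟩⟩
  | coker f g hf hfg hg _ _ hL hM =>
    let S := ShortComplex.mk (ModuleCat.ofHom f) (ModuleCat.ofHom g) (by
      rw [← ModuleCat.ofHom_comp, hfg.linearMap_comp_eq_zero]; rfl)
    have hS : S.ShortExact :=
      { exact := (ShortComplex.ShortExact.moduleCat_exact_iff_function_exact S).2 hfg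
        mono_f := (ModuleCat.mono_iff_injective _).2 hf
        epi_g := (ModuleCat.epi_iff_surjective _).2 hg }
    exact (DerivedCategory.boundedFiniteFree R).ext_of_isTriangulatedClosed₃ _
      hS.singleTriangle_distinguished hL hM

/-- Let `A = ℂ[X₁, X₂, …] = MvPolynomial ℕ ℂ`. Every bounded
cochain complex of `A`-modules with finitely presented cohomology modules is
quasi-isomorphic to a bounded cochain complex of finite rank free `A`-modules:
there is a bounded complex `F` of finite free modules and a quasi-isomorphism
`F ⟶ C`. -/
theorem bounded_fp_cohomology_quasi_iso_to_finite_free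
    (C : CochainComplex (ModuleCat (MvPolynomial ℕ ℂ)) ℤ)
    (hbdd : ∃ a b : ℤ, ∀ i : ℤ, (i < a ∨ b < i) → IsZero (C.X i))
    (hfp : ∀ i : ℤ, Module.FinitePresentation (MvPolynomial ℕ ℂ) (C.homology i)) :
    ∃ (F : CochainComplex (ModuleCat (MvPolynomial ℕ ℂ)) ℤ)
      (_ : ∀ i : ℤ, Module.Free (MvPolynomial ℕ ℂ) (F.X i) ∧
        Module.Finite (MvPolynomial ℕ ℂ) (F.X i))
      (_ : ∃ a b : ℤ, ∀ i : ℤ, (i < a ∨ b < i) → IsZero (F.X i))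
      (f : F ⟶ C), QuasiIso f := by
  let := HasDerivedCategory.standard (ModuleCat (MvPolynomial ℕ ℂ))
  obtain ⟨a, b, h⟩ := hbdd
  have : C.IsStrictlyLE b := (C.isStrictlyLE_iff b).2 fun i hi => h i (.inr hi)
  have : C.IsStrictlyGE a := (C.isStrictlyGE_iff a).2 fun i hi => h i (.inl hi)
  obtain ⟨F, f, hF, hf⟩ := DerivedCategory.exists_quasiIso_of_boundedFiniteFree
    (DerivedCategory.boundedFiniteFree_of_homology
      (fun M _ =>
        (Module.FinitePresentation.finiteFreeGenerated_mvPolynomial ℂ ℕ M).boundedFiniteFree)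
      (b + 1 - a).toNat b C inferInstance (C.isGE_of_ge _ a (by lia)) hfp)
  exact ⟨F, hF.free_finite, hF.bounded, f, hf⟩
end

section
/- Let A = ℂ[X₁, X₂, X₃, …] be the polynomial algebra over ℂ in countably infinitely many variables, and let M and N be finitely presented A-modules. Then for every i ≥ 0 the A-module Tor_i^A(M, N) is finitely presented, and Tor_i^A(M, N) = 0 for all sufficiently large i. -/
open CategoryTheory TensorProduct

universe u

/-- A commutative ring is coherent if the kernel of every linear map between finite free modules
is finitely generated. -/
class IsCoherentRing (A : Type u) [CommRing A] : Prop where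
  fg_ker_pi (m n : ℕ) (f : (Fin m → A) →ₗ[A] (Fin n → A)) : (LinearMap.ker f).FG

namespace IsCoherentRing

variable {A : Type u} [CommRing A] [IsCoherentRing A]

theorem finitePresentation_of_fg_pi {n : ℕ} (K : Submodule A (Fin n → A)) (hK : K.FG) :
    Module.FinitePresentation A K := by
  obtain ⟨m, g, rfl⟩ := K.fg_iff_exists_fin_linearMap.mp hK
  refine Module.finitePresentation_of_surjective g.rangeRestrict g.surjective_rangeRestrict ?_
  rw [LinearMap.ker_rangeRestrict]
  exact fg_ker_pi _ _ g

/-- Over a coherent ring, finitely generated submodules of finitely presented modules are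
finitely presented. -/
theorem finitePresentation_of_fg {N : Type*} [AddCommGroup N] [Module A N]
    [Module.FinitePresentation A N] (K : Submodule A N) (hK : K.FG) :
    Module.FinitePresentation A K := by
  obtain ⟨n, f, hf⟩ := Module.Finite.exists_fin' A N
  have hker := Module.FinitePresentation.fg_ker f hf
  have hcomap : (K.comap f).FG := by
    refine Submodule.fg_of_fg_map_of_fg_inf_ker f ?_ ?_
    · rwa [Submodule.map_comap_eq_of_surjective hf]
    · rwa [inf_eq_right.mpr (LinearMap.ker_le_comap f)]
  have := finitePresentation_of_fg_pi _ hcomap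
  let g : K.comap f →ₗ[A] K := f.restrict fun _ h ↦ h
  refine Module.finitePresentation_of_surjective g ?_ ?_
  · rintro ⟨y, hy⟩
    obtain ⟨x, rfl⟩ := hf y
    exact ⟨⟨x, hy⟩, rfl⟩
  · refine Submodule.fg_of_fg_map_injective _ (K.comap f).injective_subtype ?_
    suffices h : (LinearMap.ker g).map (K.comap f).subtype = LinearMap.ker f by rwa [h]
    refine le_antisymm ?_ fun x hx ↦ ?_
    · rintro _ ⟨x, hx, rfl⟩
      exact congrArg Subtype.val hx
    · have hx : f x = 0 := hx
      exact ⟨⟨x, by simp [hx]⟩, Subtype.ext hx, rfl⟩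

theorem finitePresentation_ker {M N : Type*} [AddCommGroup M] [Module A M] [AddCommGroup N]
    [Module A N] [Module.FinitePresentation A M] [Module.FinitePresentation A N]
    (f : M →ₗ[A] N) : Module.FinitePresentation A (LinearMap.ker f) := by
  have := finitePresentation_of_fg (LinearMap.range f) .of_finite
  refine finitePresentation_of_fg _ ?_
  rw [← LinearMap.ker_rangeRestrict]
  exact Module.FinitePresentation.fg_ker _ f.surjective_rangeRestrict

theorem finitePresentation_homology (S : ShortComplex (ModuleCat.{u} A))
    [Module.FinitePresentation A S.X₁] [Module.FinitePresentation A S.X₂]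
    [Module.FinitePresentation A S.X₃] : Module.FinitePresentation A S.homology := by
  have := finitePresentation_ker S.g.hom
  have : Module.FinitePresentation A
      (LinearMap.ker S.g.hom ⧸ LinearMap.range S.moduleCatToCycles) :=
    Module.finitePresentation_of_surjective (Submodule.mkQ _) (Submodule.mkQ_surjective _) (by
      rw [Submodule.ker_mkQ]
      exact .of_finite)
  have : Module.FinitePresentation A S.moduleCatLeftHomologyData.H := this
  exact .of_equiv S.moduleCatHomologyIso.toLinearEquiv.symm

end IsCoherentRing

/-- A short exact sequence of modules gives a short exact sequence in `ModuleCat`. -/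
theorem ModuleCat.shortExact_of_function_exact {R : Type u} [CommRing R] {M₁ M₂ M₃ : Type u}
    [AddCommGroup M₁] [AddCommGroup M₂] [AddCommGroup M₃] [Module R M₁] [Module R M₂]
    [Module R M₃] (f : M₁ →ₗ[R] M₂) (g : M₂ →ₗ[R] M₃) (hf : Function.Injective f)
    (hfg : Function.Exact f g) (hg : Function.Surjective g) :
    (ShortComplex.mk (ModuleCat.ofHom f) (ModuleCat.ofHom g)
      (by rw [← ModuleCat.ofHom_comp, hfg.linearMap_comp_eq_zero]; rfl)).ShortExact :=
  ModuleCat.shortComplex_shortExact _ hfg hf hg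

/-- Flat base change does not increase the projective dimension. -/
theorem ModuleCat.hasProjectiveDimensionLE_baseChange {R S : Type u} [CommRing R] [CommRing S]
    [Algebra R S] [Module.Flat R S] (n : ℕ) (M : Type u) [AddCommGroup M] [Module R M]
    (hM : HasProjectiveDimensionLE (ModuleCat.of R M) n) :
    HasProjectiveDimensionLE (ModuleCat.of S (S ⊗[R] M)) n := by
  induction n generalizing M with
  | zero =>
    simp only [HasProjectiveDimensionLE, zero_add] at hM ⊢
    rw [← projective_iff_hasProjectiveDimensionLT_one, ← IsProjective.iff_projective] at hM ⊢
    infer_instance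
  | succ n ih =>
    obtain ⟨P, _, _, _, g, hg⟩ : ∃ (P : Type u) (_ : AddCommGroup P) (_ : Module R P)
        (_ : Module.Free R P) (g : P →ₗ[R] M), Function.Surjective g :=
      ⟨M →₀ R, _, _, inferInstance, Finsupp.linearCombination R id,
        Finsupp.linearCombination_id_surjective R M⟩
    have hfg := LinearMap.exact_subtype_ker_map g
    have h := shortExact_of_function_exact _ g (Submodule.injective_subtype _) hfg hg
    have hfg' : Function.Exact ((LinearMap.ker g).subtype.baseChange S) (g.baseChange S) :=
      lTensor_exact S hfg hg
    have h' := shortExact_of_function_exact ((LinearMap.ker g).subtype.baseChange S)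
      (g.baseChange S) (Module.Flat.lTensor_preserves_injective_linearMap _
        (Submodule.injective_subtype _)) hfg'
      (LinearMap.lTensor_surjective S hg)
    have p₁ : Projective (ModuleCat.of R P) :=
      (IsProjective.iff_projective _).mp inferInstance
    have p₂ : Projective (ModuleCat.of S (S ⊗[R] P)) :=
      (IsProjective.iff_projective _).mp inferInstance
    exact (h'.hasProjectiveDimensionLT_X₃_iff n p₂).mpr
      (ih _ ((h.hasProjectiveDimensionLT_X₃_iff n p₁).mp hM))

section GlobalDimension

open Polynomial

namespace PolynomialModule

variable {R M : Type u} [CommRing R] [AddCommGroup M] [Module R M] [Module R[X] M]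
  [IsScalarTower R R[X] M]

/-- The endomorphism `X ⊗ 1 - 1 ⊗ X` of `R[X] ⊗[R] M`, for an `R[X]`-module `M`. -/
noncomputable def subX (R M : Type u) [CommRing R] [AddCommGroup M] [Module R M] [Module R[X] M]
    [IsScalarTower R R[X] M] : R[X] ⊗[R] M →ₗ[R[X]] R[X] ⊗[R] M :=
  LinearMap.lsmul R[X] _ (X : R[X]) -
    (((LinearMap.lsmul R[X] M (X : R[X])).restrictScalars R).baseChange R[X])

/-- The scalar multiplication map `R[X] ⊗[R] M → M`. -/
noncomputable def smulMap (R M : Type u) [CommRing R] [AddCommGroup M] [Module R M] [Module R[X] M]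
    [IsScalarTower R R[X] M] : R[X] ⊗[R] M →ₗ[R[X]] M :=
  LinearMap.liftBaseChange R[X] (LinearMap.id : M →ₗ[R] M)

@[simp]
theorem subX_tmul (p : R[X]) (m : M) :
    subX R M (p ⊗ₜ m) = (X * p) ⊗ₜ m - p ⊗ₜ ((X : R[X]) • m) := by
  simp [subX, smul_tmul']

@[simp]
theorem smulMap_tmul (p : R[X]) (m : M) : smulMap R M (p ⊗ₜ m) = p • m := by
  simp [smulMap]

theorem smulMap_surjective : Function.Surjective (smulMap R M) := fun m ↦ ⟨1 ⊗ₜ m, by simp⟩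

theorem sub_one_tmul_mem_range (z : R[X] ⊗[R] M) :
    z - 1 ⊗ₜ smulMap R M z ∈ LinearMap.range (subX R M) := by
  induction z with
  | zero => simp
  | add x y hx hy =>
    convert add_mem hx hy using 1
    rw [map_add, tmul_add]
    abel
  | tmul p m =>
    induction p using Polynomial.induction_on' generalizing m with
    | add p q hp hq =>
      convert add_mem (hp m) (hq m) using 1
      rw [smulMap_tmul, smulMap_tmul, smulMap_tmul, add_smul, tmul_add, add_tmul]
      abel
    | monomial n a =>
      induction n generalizing m with
      | zero =>
        simp only [monomial_zero_left, smulMap_tmul]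
        rw [← Polynomial.algebraMap_eq, algebraMap_smul, tmul_smul, smul_tmul',
          Algebra.algebraMap_eq_smul_one, sub_self]
        exact zero_mem _
      | succ n ih =>
        convert add_mem (ih ((X : R[X]) • m)) (LinearMap.mem_range_self (subX R M)
          (monomial n a ⊗ₜ m)) using 1
        simp only [smulMap_tmul, subX_tmul, X_mul_monomial, smul_smul, monomial_mul_X]
        abel

theorem exact_subX_smulMap : Function.Exact (subX R M) (smulMap R M) := by
  intro z
  refine ⟨fun hz ↦ ?_, ?_⟩
  · simpa [hz] using sub_one_tmul_mem_range z
  · rintro ⟨w, rfl⟩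
    induction w with
    | zero => simp
    | add x y hx hy => simp [hx, hy]
    | tmul p m => simp [mul_smul, smul_comm p (X : R[X]) m]

theorem subX_injective : Function.Injective (subX R M) := by
  rw [injective_iff_map_eq_zero]
  intro z hz
  let e := polynomialTensorProductLEquivPolynomialModule R M
  have key (w : R[X] ⊗[R] M) (n : ℕ) :
      (e (subX R M w)).coeff (n + 1) = (e w).coeff n - (X : R[X]) • (e w).coeff (n + 1) := by
    induction w with
    | zero => simp
    | add x y hx hy => simp only [map_add, coeff_add, Finsupp.add_apply, hx, hy, smul_add]; abel
    | tmul p m =>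
      have he (p : R[X]) (m : M) : e (p ⊗ₜ m) = p • single R 0 m :=
        LinearMap.liftBaseChange_tmul ..
      have hc : p.coeff (n + 1) • (X : R[X]) • m = (X : R[X]) • p.coeff (n + 1) • m := by
        rw [← algebraMap_smul R[X] (p.coeff (n + 1)), ← algebraMap_smul R[X] (p.coeff (n + 1)),
          smul_comm]
      have hsub (x y : PolynomialModule R M) : (x - y).coeff = x.coeff - y.coeff :=
        map_sub (coeffAddEquiv (R := R)) x y
      rw [subX_tmul, map_sub, he, he, he, hsub]
      simp [hc]
  have hstep (n : ℕ) : (e z).coeff n = (X : R[X]) • (e z).coeff (n + 1) := by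
    have := key z n
    rw [hz, map_zero, coeff_zero, Finsupp.zero_apply] at this
    exact (sub_eq_zero.mp this.symm)
  have hpow (n k : ℕ) : (e z).coeff n = (X ^ k : R[X]) • (e z).coeff (n + k) := by
    induction k with
    | zero => simp
    | succ k ih => rw [ih, hstep (n + k), smul_smul, pow_succ, add_assoc]
  obtain ⟨N, hN⟩ := (e z).coeff.support.exists_nat_subset_range
  have : e z = 0 := by
    ext n
    rw [hpow n N, Finsupp.notMem_support_iff.mp fun h ↦ by simpa using hN h, smul_zero]
    simp
  exact e.map_eq_zero_iff.mp this

end PolynomialModule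

/-- Passing to a polynomial ring raises the global dimension by at most one. -/
theorem ModuleCat.hasProjectiveDimensionLE_polynomial {R : Type u} [CommRing R] (n : ℕ)
    (hR : ∀ M : ModuleCat.{u} R, HasProjectiveDimensionLE M n) (M : ModuleCat.{u} R[X]) :
    HasProjectiveDimensionLE M (n + 1) := by
  let _ : Module R M := Module.compHom M (C : R →+* R[X])
  have : IsScalarTower R R[X] M := ⟨fun r p m ↦ by
    rw [Polynomial.smul_eq_C_mul, mul_smul]; rfl⟩
  have h := shortExact_of_function_exact _ _ PolynomialModule.subX_injective
    PolynomialModule.exact_subX_smulMap (PolynomialModule.smulMap_surjective (R := R) (M := M))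
  have h₁ : HasProjectiveDimensionLE (ModuleCat.of R[X] (R[X] ⊗[R] M)) n :=
    hasProjectiveDimensionLE_baseChange n M (hR (.of R M))
  exact h.hasProjectiveDimensionLT_X₃ (n + 1) h₁
    (hasProjectiveDimensionLT_of_ge _ (n + 1) _ (Nat.le_succ _))

theorem ModuleCat.hasProjectiveDimensionLE_of_ringEquiv {R R' : Type u} [CommRing R]
    [CommRing R'] (e : R ≃+* R') (n : ℕ)
    (hR : ∀ M : ModuleCat.{u} R, HasProjectiveDimensionLE M n) (M : ModuleCat.{u} R') :
    HasProjectiveDimensionLE M n := by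
  let _ : Module R M := Module.compHom M e.toRingHom
  have := hR (.of R M)
  let _ := RingHomInvPair.of_ringEquiv e
  let _ := RingHomInvPair.symm (RingHomClass.toRingHom e) (RingHomClass.toRingHom e.symm)
  let e' : ModuleCat.of R M ≃ₛₗ[RingHomClass.toRingHom e] M :=
    { AddEquiv.refl M with map_smul' := fun _ _ ↦ rfl }
  exact hasProjectiveDimensionLE_of_semiLinearEquiv e e' n

/-- Hilbert's syzygy theorem: a polynomial ring in `n` variables over a field has global
dimension at most `n`. -/
theorem ModuleCat.hasProjectiveDimensionLE_mvPolynomial_fin {k : Type u} [Field k] (n : ℕ)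
    (M : ModuleCat.{u} (MvPolynomial (Fin n) k)) : HasProjectiveDimensionLE M n := by
  induction n with
  | zero =>
    refine hasProjectiveDimensionLE_of_ringEquiv
      (MvPolynomial.isEmptyRingEquiv k (Fin 0)).symm 0 (fun V ↦ ?_) M
    rw [← projective_iff_hasProjectiveDimensionLE_zero, ← IsProjective.iff_projective]
    exact Module.Projective.of_free
  | succ n ih =>
    exact hasProjectiveDimensionLE_of_ringEquiv (MvPolynomial.finSuccEquiv k n).symm.toRingEquiv
      (n + 1) (hasProjectiveDimensionLE_polynomial n ih) M

/-- The subalgebra of polynomials in finitely many given variables has finite global dimension. -/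
theorem ModuleCat.hasProjectiveDimensionLE_supported {k : Type u} [Field k] {σ : Type u}
    (s : Finset σ) (M : ModuleCat.{u} (MvPolynomial.supported k (s : Set σ))) :
    HasProjectiveDimensionLE M s.card :=
  hasProjectiveDimensionLE_of_ringEquiv
    ((MvPolynomial.renameEquiv k s.equivFin.symm).trans
      (MvPolynomial.supportedEquivMvPolynomial (R := k) (s : Set σ)).symm).toRingEquiv
    s.card (hasProjectiveDimensionLE_mvPolynomial_fin s.card) M

instance MvPolynomial.isNoetherianRing_supported_s12 {k σ : Type*} [Field k] (s : Finset σ) :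
    IsNoetherianRing (MvPolynomial.supported k (s : Set σ)) :=
  isNoetherianRing_of_ringEquiv _
    (MvPolynomial.supportedEquivMvPolynomial (R := k) (s : Set σ)).symm.toRingEquiv

instance MvPolynomial.flat_supported {k σ : Type*} [Field k] (s : Set σ) :
    Module.Flat (MvPolynomial.supported k s) (MvPolynomial σ k) := by
  classical
  rw [← RingHom.flat_algebraMap_iff]
  let e : MvPolynomial ↥sᶜ (MvPolynomial s k) ≃+* MvPolynomial σ k :=
    (sumRingEquiv k ↥sᶜ s).symm.trans
      (renameEquiv k ((Equiv.sumComm _ _).trans (Equiv.Set.sumCompl s))).toRingEquiv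
  let e' : supported k s ≃+* MvPolynomial s k := (supportedEquivMvPolynomial s).toRingEquiv
  have h : algebraMap (supported k s) (MvPolynomial σ k) =
      (e.toRingHom.comp (algebraMap (MvPolynomial s k) _)).comp e'.toRingHom := by
    suffices h : (algebraMap (supported k s) (MvPolynomial σ k)).comp e'.symm.toRingHom =
        e.toRingHom.comp (algebraMap (MvPolynomial s k) _) by
      rw [← h]
      ext x
      simp
    refine ringHom_ext (fun a ↦ ?_) fun i ↦ ?_
    · have := supportedEquivMvPolynomial_symm_C s a
      simp [e, e', algebraMap_eq, this]
    · have := supportedEquivMvPolynomial_symm_X (R := k) s i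
      simp [e, e', algebraMap_eq, this]
  rw [h]
  exact (RingHom.Flat.of_bijective e'.bijective).comp
    (((RingHom.flat_algebraMap_iff).mpr inferInstance).comp
      (RingHom.Flat.of_bijective e.bijective))

end GlobalDimension

section Descent

variable {R S : Type u} [CommRing R] [CommRing S] [Algebra R S]

/-- A linear map between finite free modules with matrix entries in a subring is a base change. -/
theorem LinearMap.exists_baseChange_eq {m n : ℕ} (g : (Fin m → S) →ₗ[S] (Fin n → S))
    (c : Fin m → Fin n → R) (hc : ∀ j i, algebraMap R S (c j i) = g (Pi.single j 1) i) :
    ∃ g₀ : (Fin m → R) →ₗ[R] (Fin n → R),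
      (piScalarRight R S S (Fin n)).toLinearMap ∘ₗ g₀.baseChange S =
        g ∘ₗ (piScalarRight R S S (Fin m)).toLinearMap := by
  refine ⟨Fintype.linearCombination R c, ?_⟩
  ext j i
  have h : (fun i ↦ algebraMap R S ((Pi.single j 1 : Fin m → R) i)) = Pi.single j 1 := by
    ext1 i
    obtain rfl | h := eq_or_ne i j <;> simp [*]
  simp [Algebra.smul_def, h, hc]

theorem LinearMap.fg_ker_of_baseChange [IsNoetherianRing R] [Module.Flat R S] {m n : ℕ}
    (g : (Fin m → S) →ₗ[S] (Fin n → S)) (g₀ : (Fin m → R) →ₗ[R] (Fin n → R))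
    (h : (piScalarRight R S S (Fin n)).toLinearMap ∘ₗ g₀.baseChange S =
      g ∘ₗ (piScalarRight R S S (Fin m)).toLinearMap) : (ker g).FG := by
  have hex : Function.Exact ((ker g₀).subtype.baseChange S) (g₀.baseChange S) :=
    Module.Flat.lTensor_exact S (exact_subtype_ker_map g₀)
  have hker : (range ((ker g₀).subtype.baseChange S)).map
      (piScalarRight R S S (Fin m)).toLinearMap = ker g := by
    have := congr(ker $h)
    rw [LinearEquiv.ker_comp, hex.linearMap_ker_eq, ker_comp] at this
    rw [this, Submodule.map_comap_eq_of_surjective (piScalarRight R S S (Fin m)).surjective]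
  rw [← hker]
  exact Submodule.FG.map _ .of_finite

theorem Module.exists_linearEquiv_baseChange {m n : ℕ} {N : Type u} [AddCommGroup N] [Module S N]
    (g : (Fin m → S) →ₗ[S] (Fin n → S)) (f : (Fin n → S) →ₗ[S] N) (hf : Function.Surjective f)
    (hgf : Function.Exact g f) (g₀ : (Fin m → R) →ₗ[R] (Fin n → R))
    (h : (piScalarRight R S S (Fin n)).toLinearMap ∘ₗ g₀.baseChange S =
      g ∘ₗ (piScalarRight R S S (Fin m)).toLinearMap) :
    Nonempty ((S ⊗[R] ((Fin n → R) ⧸ LinearMap.range g₀)) ≃ₗ[S] N) := by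
  let q := (LinearMap.range g₀).mkQ.baseChange S
  have hq : Function.Surjective q :=
    LinearMap.lTensor_surjective S (Submodule.mkQ_surjective _)
  have hex : Function.Exact (g₀.baseChange S) q :=
    lTensor_exact S (LinearMap.exact_map_mkQ_range g₀) (Submodule.mkQ_surjective _)
  let f' := f ∘ₗ (piScalarRight R S S (Fin n)).toLinearMap
  have hf' : Function.Surjective f' := hf.comp (piScalarRight R S S (Fin n)).surjective
  have hker : LinearMap.ker q = LinearMap.ker f' := by
    rw [hex.linearMap_ker_eq, LinearMap.ker_comp, hgf.linearMap_ker_eq]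
    ext x
    constructor
    · rintro ⟨y, rfl⟩
      exact ⟨piScalarRight R S S (Fin m) y, congr($h y).symm⟩
    · rintro ⟨y, hy⟩
      obtain ⟨y, rfl⟩ := (piScalarRight R S S (Fin m)).surjective y
      exact ⟨y, (piScalarRight R S S (Fin n)).injective (congr($h y).trans hy)⟩
  exact ⟨(q.quotKerEquivOfSurjective hq).symm ≪≫ₗ Submodule.quotEquivOfEq _ _ hker ≪≫ₗ
    f'.quotKerEquivOfSurjective hf'⟩

theorem ModuleCat.hasProjectiveDimensionLE_of_presentation [Module.Flat R S] {d m n : ℕ}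
    (hd : ∀ M : ModuleCat.{u} R, HasProjectiveDimensionLE M d) (N : ModuleCat.{u} S)
    (g : (Fin m → S) →ₗ[S] (Fin n → S)) (f : (Fin n → S) →ₗ[S] N) (hf : Function.Surjective f)
    (hgf : Function.Exact g f) (c : Fin m → Fin n → R)
    (hc : ∀ j i, algebraMap R S (c j i) = g (Pi.single j 1) i) :
    HasProjectiveDimensionLE N d := by
  obtain ⟨g₀, h⟩ := g.exists_baseChange_eq c hc
  obtain ⟨e⟩ := Module.exists_linearEquiv_baseChange g f hf hgf g₀ h
  have := hasProjectiveDimensionLE_baseChange (S := S) d _ (hd (.of R (_ ⧸ LinearMap.range g₀)))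
  exact hasProjectiveDimensionLT_of_iso e.toModuleIso _

theorem MvPolynomial.exists_forall_mem_supported {k σ ι κ : Type*} [Field k] [Finite ι] [Finite κ]
    (c : ι → κ → MvPolynomial σ k) :
    ∃ s : Finset σ, ∀ j i, c j i ∈ supported k (s : Set σ) := by
  classical
  cases nonempty_fintype ι
  cases nonempty_fintype κ
  refine ⟨Finset.univ.biUnion fun p : ι × κ ↦ (c p.1 p.2).vars, fun j i ↦ ?_⟩
  rw [mem_supported, Finset.coe_subset]
  exact Finset.subset_biUnion_of_mem (fun p : ι × κ ↦ (c p.1 p.2).vars) (Finset.mem_univ (j, i))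

instance MvPolynomial.isCoherentRing {k σ : Type u} [Field k] :
    IsCoherentRing (MvPolynomial σ k) where
  fg_ker_pi m n g := by
    obtain ⟨s, hs⟩ := exists_forall_mem_supported fun j i ↦ g (Pi.single j 1) i
    obtain ⟨g₀, h⟩ := g.exists_baseChange_eq (R := supported k (s : Set σ))
      (fun j i ↦ ⟨_, hs j i⟩) fun _ _ ↦ rfl
    exact LinearMap.fg_ker_of_baseChange g g₀ h

/-- Finitely presented modules over a polynomial ring have finite projective dimension. -/
theorem ModuleCat.exists_hasProjectiveDimensionLE_mvPolynomial {k σ : Type u} [Field k]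
    (N : ModuleCat.{u} (MvPolynomial σ k)) [Module.FinitePresentation (MvPolynomial σ k) N] :
    ∃ d : ℕ, HasProjectiveDimensionLE N d := by
  obtain ⟨n, m, f, g, hf, hgf⟩ := Module.FinitePresentation.exists_fin' (MvPolynomial σ k) N
  obtain ⟨s, hs⟩ := MvPolynomial.exists_forall_mem_supported fun j i ↦ g (Pi.single j 1) i
  exact ⟨s.card, hasProjectiveDimensionLE_of_presentation (hasProjectiveDimensionLE_supported s)
    N g f hf hgf (fun j i ↦ ⟨_, hs j i⟩) fun _ _ ↦ rfl⟩

end Descent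

section FiniteResolution

open Limits

theorem CategoryTheory.ShortComplex.Exact.epi_comp {C : Type*} [Category* C] [Abelian C]
    {S : ShortComplex C} (hS : S.Exact) {P : C} (p : P ⟶ S.X₁) [Epi p] :
    (ShortComplex.mk (p ≫ S.f) S.g (by simp)).Exact := by
  let φ : ShortComplex.mk (p ≫ S.f) S.g (by simp) ⟶ S := { τ₁ := p, τ₂ := 𝟙 _, τ₃ := 𝟙 _ }
  exact (ShortComplex.exact_iff_of_epi_of_isIso_of_mono φ).mpr hS

theorem CategoryTheory.ShortComplex.Exact.comp_mono {C : Type*} [Category* C] [Abelian C]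
    {S : ShortComplex C} (hS : S.Exact) {Y : C} (i : S.X₃ ⟶ Y) [Mono i] :
    (ShortComplex.mk S.f (S.g ≫ i) (by simp)).Exact := by
  let φ : S ⟶ ShortComplex.mk S.f (S.g ≫ i) (by simp) := { τ₁ := 𝟙 _, τ₂ := 𝟙 _, τ₃ := i }
  exact (ShortComplex.exact_iff_of_epi_of_isIso_of_mono φ).mp hS

/-- Splicing an exact complex resolving `S.X₁` by projectives with a short exact sequence `S` whose
middle term is projective. -/
noncomputable def CategoryTheory.ProjectiveResolution.splice {C : Type*} [Category* C]
    [Abelian C] {S : ShortComplex C} (hS : S.ShortExact) [Projective S.X₂]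
    (K : ChainComplex C ℕ) [∀ n, Projective (K.X n)] (p : K.X 0 ⟶ S.X₁) [Epi p]
    (w : K.d 1 0 ≫ p = 0) (h₀ : (ShortComplex.mk _ _ w).Exact)
    (h : ∀ n, (ShortComplex.mk _ _ (K.d_comp_d (n + 2) (n + 1) n)).Exact) :
    ProjectiveResolution S.X₃ where
  complex := K.augment (p ≫ S.f) (by rw [← Category.assoc, w, zero_comp])
  projective n := by
    cases n
    · exact inferInstanceAs (Projective S.X₂)
    · exact inferInstanceAs (Projective (K.X _))
  π := (ChainComplex.toSingle₀Equiv _ _).symm ⟨S.g, show (p ≫ S.f) ≫ S.g = 0 by simp⟩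
  quasiIso := ⟨fun n ↦ by
    have := hS.mono_f
    have hπ := ChainComplex.toSingle₀Equiv_symm_apply_f_zero (X := S.X₃)
      (C := K.augment (p ≫ S.f) (by rw [← Category.assoc, w, zero_comp])) S.g
      (show (p ≫ S.f) ≫ S.g = 0 by simp)
    rcases n with _ | n
    · rw [ChainComplex.quasiIsoAt₀_iff, ShortComplex.quasiIso_iff_of_zeros']
      · refine (ShortComplex.exact_and_epi_g_iff_of_iso
          (S₂ := ShortComplex.mk (p ≫ S.f) S.g (by simp)) ?_).2
          ⟨hS.exact.epi_comp p, hS.epi_g⟩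
        exact ShortComplex.isoMk (Iso.refl _) (Iso.refl _) (Iso.refl _)
          ((Category.id_comp _).trans (Category.comp_id _).symm)
          ((Category.id_comp _).trans (hπ.symm.trans (Category.comp_id _).symm))
      all_goals rfl
    · rw [quasiIsoAt_iff_exactAt']
      · rw [HomologicalComplex.exactAt_iff' _ (n + 1 + 1) (n + 1) n (by simp) (by simp)]
        rcases n with _ | n
        · exact h₀.comp_mono S.f
        · exact h n
      · apply ChainComplex.exactAt_succ_single_obj⟩

/-- Splicing a projective resolution of `S.X₁` with a short exact sequence `S` whose middle term is
projective. -/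
noncomputable def CategoryTheory.ProjectiveResolution.ofShortExact {C : Type*} [Category* C]
    [Abelian C] {S : ShortComplex C} (hS : S.ShortExact) [Projective S.X₂]
    (Q : ProjectiveResolution S.X₁) : ProjectiveResolution S.X₃ :=
  let p : Q.complex.X 0 ⟶ S.X₁ := Q.π.f 0
  have : Epi p := inferInstanceAs (Epi (Q.π.f 0))
  .splice hS Q.complex p Q.complex_d_comp_π_f_zero Q.exact₀ Q.exact_succ

/-- Over a coherent ring, a finitely presented module of finite projective dimension has a finite
resolution by finitely generated projective modules. -/
theorem ModuleCat.exists_finite_projectiveResolution {A : Type u} [CommRing A] [IsCoherentRing A]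
    (d : ℕ) (N : ModuleCat.{u} A) [Module.FinitePresentation A N]
    (hN : HasProjectiveDimensionLE N d) :
    ∃ P : ProjectiveResolution N, (∀ n, Module.Finite A (P.complex.X n)) ∧
      ∀ n, d < n → IsZero (P.complex.X n) := by
  induction d generalizing N with
  | zero =>
    have := (projective_iff_hasProjectiveDimensionLE_zero N).mpr hN
    refine ⟨.self N, fun n ↦ ?_, fun n hn ↦ ?_⟩
    · rcases n with _ | n
      · exact inferInstanceAs (Module.Finite A N)
      · have := ModuleCat.subsingleton_of_isZero
          (HomologicalComplex.isZero_single_obj_X (.down ℕ) 0 N (n + 1) (by simp))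
        exact inferInstanceAs
          (Module.Finite A (((ChainComplex.single₀ (ModuleCat.{u} A)).obj N).X (n + 1)))
    · exact HomologicalComplex.isZero_single_obj_X (.down ℕ) 0 N n (by lia)
  | succ d ih =>
    obtain ⟨n, f, hf⟩ := Module.Finite.exists_fin' A N
    have hS := shortExact_of_function_exact (LinearMap.ker f).subtype f
      (Submodule.injective_subtype _) (LinearMap.exact_subtype_ker_map f) hf
    have hP : Projective (ModuleCat.of A (Fin n → A)) :=
      (IsProjective.iff_projective _).mp inferInstance
    have : Module.FinitePresentation A (ModuleCat.of A (LinearMap.ker f)) :=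
      IsCoherentRing.finitePresentation_ker f
    obtain ⟨Q, hQ, hQ₀⟩ := ih (ModuleCat.of A (LinearMap.ker f))
      ((hS.hasProjectiveDimensionLT_X₃_iff d hP).mp hN)
    refine ⟨.ofShortExact hS Q, fun i ↦ ?_, fun i hi ↦ ?_⟩
    · rcases i with _ | i
      · exact inferInstanceAs (Module.Finite A (Fin n → A))
      · exact hQ i
    · rcases i with _ | i
      · lia
      · exact hQ₀ i (by lia)

end FiniteResolution

theorem Module.FinitePresentation.tensorProduct {A : Type*} [CommRing A]
    (M P : Type*) [AddCommGroup M] [Module A M] [AddCommGroup P] [Module A P]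
    [Module.FinitePresentation A M] [Module.FinitePresentation A P] :
    Module.FinitePresentation A (M ⊗[A] P) := by
  obtain ⟨n, m, f, g, hf, hgf⟩ := Module.FinitePresentation.exists_fin' A P
  have : Module.FinitePresentation A (M ⊗[A] (Fin n → A)) :=
    .of_equiv (piScalarRight A A M (Fin n)).symm
  refine Module.finitePresentation_of_surjective (f.lTensor M)
    (LinearMap.lTensor_surjective M hf) ?_
  rw [(lTensor_exact M hgf hf).linearMap_ker_eq]
  exact .of_finite

open MonoidalCategory in
theorem ModuleCat.finitePresentation_tor {A : Type u} [CommRing A] [IsCoherentRing A]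
    (M N : ModuleCat.{u} A) [Module.FinitePresentation A M] (P : ProjectiveResolution N)
    [∀ n, Module.Finite A (P.complex.X n)] (i : ℕ) :
    Module.FinitePresentation A (((Tor (ModuleCat.{u} A) i).obj M).obj N) := by
  let F := (tensoringLeft (ModuleCat.{u} A)).obj M
  let K := (F.mapHomologicalComplex (.down ℕ)).obj P.complex
  have hK (n) : Module.FinitePresentation A (K.X n) := by
    have : Module.Projective A (P.complex.X n) :=
      (IsProjective.iff_projective (P.complex.X n)).mpr (P.projective n)
    have := Module.finitePresentation_of_projective A (P.complex.X n)
    exact Module.FinitePresentation.tensorProduct M (P.complex.X n)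
  have : Module.FinitePresentation A (K.sc i).X₁ := hK _
  have : Module.FinitePresentation A (K.sc i).X₂ := hK _
  have : Module.FinitePresentation A (K.sc i).X₃ := hK _
  have : Module.FinitePresentation A (K.homology i) :=
    IsCoherentRing.finitePresentation_homology (K.sc i)
  exact (P.isoLeftDerivedObj F i).toLinearEquiv.finitePresentation_iff.mpr this

open MonoidalCategory in
theorem ModuleCat.isZero_tor {A : Type u} [CommRing A] (M N : ModuleCat.{u} A)
    (P : ProjectiveResolution N) (i : ℕ) (hP : Limits.IsZero (P.complex.X i)) :
    Limits.IsZero (((Tor (ModuleCat.{u} A) i).obj M).obj N) := by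
  let F := (tensoringLeft (ModuleCat.{u} A)).obj M
  let K := (F.mapHomologicalComplex (.down ℕ)).obj P.complex
  have hK : Limits.IsZero (K.X i) := F.map_isZero hP
  exact (ShortComplex.isZero_homology_of_isZero_X₂ (K.sc i) hK).of_iso (P.isoLeftDerivedObj F i)


/-- Let `A = ℂ[X₁, X₂, …] = MvPolynomial ℕ ℂ` and let `M`,
`N` be finitely presented `A`-modules. Then `Tor_i^A(M, N)` is a finitely
presented `A`-module for every `i ≥ 0`, and vanishes for all sufficiently
large `i`. -/
theorem tor_finitely_presented_and_eventually_zero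
    (M N : Type) [AddCommGroup M] [Module (MvPolynomial ℕ ℂ) M]
    [AddCommGroup N] [Module (MvPolynomial ℕ ℂ) N]
    [Module.FinitePresentation (MvPolynomial ℕ ℂ) M]
    [Module.FinitePresentation (MvPolynomial ℕ ℂ) N] :
    (∀ i : ℕ, Module.FinitePresentation (MvPolynomial ℕ ℂ)
      (((Tor (ModuleCat (MvPolynomial ℕ ℂ)) i).obj
          (ModuleCat.of (MvPolynomial ℕ ℂ) M)).obj
        (ModuleCat.of (MvPolynomial ℕ ℂ) N))) ∧
    ∃ i₀ : ℕ, ∀ i : ℕ, i₀ ≤ i → Subsingleton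
      (((Tor (ModuleCat (MvPolynomial ℕ ℂ)) i).obj
          (ModuleCat.of (MvPolynomial ℕ ℂ) M)).obj
        (ModuleCat.of (MvPolynomial ℕ ℂ) N)) := by
  have hM : Module.FinitePresentation (MvPolynomial ℕ ℂ) (ModuleCat.of (MvPolynomial ℕ ℂ) M) := ‹_›
  have hN : Module.FinitePresentation (MvPolynomial ℕ ℂ) (ModuleCat.of (MvPolynomial ℕ ℂ) N) := ‹_›
  obtain ⟨d, hd⟩ := ModuleCat.exists_hasProjectiveDimensionLE_mvPolynomial
    (ModuleCat.of (MvPolynomial ℕ ℂ) N)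
  obtain ⟨P, hP, hP₀⟩ := ModuleCat.exists_finite_projectiveResolution d _ hd
  exact ⟨ModuleCat.finitePresentation_tor _ _ P, d + 1, fun i hi ↦
    ModuleCat.subsingleton_of_isZero (ModuleCat.isZero_tor _ _ P i (hP₀ i hi))⟩
end
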